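/- Let f_1, …, f_n be C^∞ self-maps of compact intervals, each with nonzero topological entropy h_top(f_i) > 0. Then the Cartesian product f_1 × … × f_n, a C^∞ self-map of the product manifold (a compact n-dimensional cube), is entropy-expanding. -/

import Mathlib

open Set Filter Topology MeasureTheory
open scoped Manifold ENNReal NNReal RealInnerProductSpace

noncomputable section

/-! ### Euclidean spaces and unit cubes -/

abbrev Euc (n : ℕ) : Type := EuclideanSpace ℝ (Fin n)

def unitCube (k : ℕ) : Set (Euc k) := {t | ∀ i, |t i| ≤ 1}

/-! ### Bowen–Dinaburg covering numbers and topological entropies -/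

section MetricDyn

variable {X : Type*} [MetricSpace X]

/-- The `(ε,n)`-dynamical ball centered at `x`. -/
def dynBall (f : X → X) (ε : ℝ) (n : ℕ) (x : X) : Set X :=
  {y | ∀ m, m < n → dist (f^[m] y) (f^[m] x) < ε}

/-- The `(ε,n)`-covering number of `S`: minimal number of `(ε,n)`-dynamical balls
centered at points of `S` needed to cover `S` (`⊤` if there is no finite cover). -/
def coverNum (f : X → X) (ε : ℝ) (n : ℕ) (S : Set X) : ℕ∞ :=
  sInf {m : ℕ∞ | ∃ F : Finset X, ↑F ⊆ S ∧ (S ⊆ ⋃ x ∈ F, dynBall f ε n x) ∧ m = F.card}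

/-- Logarithm on `ℕ∞`. -/
def elog : ℕ∞ → EReal := WithTop.recTopCoe ⊤ (fun k : ℕ => ((Real.log k : ℝ) : EReal))

/-- Topological entropy of the subset `S` (Bowen–Dinaburg):
`lim_{ε→0} limsup_n (1/n) log r_f(ε,n,S)`, the limit being a supremum by monotonicity. -/
def entSet (f : X → X) (S : Set X) : EReal :=
  ⨆ ε : {ε : ℝ // 0 < ε},
    Filter.atTop.limsup fun n : ℕ => (((n : ℝ)⁻¹ : ℝ) : EReal) * elog (coverNum f (ε : ℝ) n S)

/-- Topological entropy of `f`. -/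
def htop (f : X → X) : EReal := entSet f Set.univ

/-- Topological entropy of a collection of subsets: `sup_{D ∈ 𝓓} h_top(f,D)`. -/
def entColl (f : X → X) (D : Set (Set X)) : EReal := ⨆ S ∈ D, entSet f S

def supCoverNum (f : X → X) (ε : ℝ) (n : ℕ) (D : Set (Set X)) : ℕ∞ :=
  ⨆ S ∈ D, coverNum f ε n S

/-- Uniform topological entropy of a collection of subsets. -/
def unifEntColl (f : X → X) (D : Set (Set X)) : EReal :=
  ⨆ ε : {ε : ℝ // 0 < ε},
    Filter.atTop.limsup fun n : ℕ =>
      (((n : ℝ)⁻¹ : ℝ) : EReal) * elog (supCoverNum f (ε : ℝ) n D)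

/-- Lipschitz constant of `f` (as an extended nonnegative real). -/
def lipConst (f : X → X) : ℝ≥0∞ := ⨆ (x : X) (y : X), edist (f x) (f y) / edist x y

/-- `log Lip(f)`. -/
def logLip (f : X → X) : EReal := ENNReal.log (lipConst f)

/-- `lip(f) = max (log Lip f) 0`. -/
def lipPlus (f : X → X) : EReal := max (logLip f) 0

/-- Number of fixed points of `f^n`. -/
def periodicCount (f : X → X) (n : ℕ) : ℕ∞ := ENat.card {x : X // f^[n] x = x}

/-- The periodic points of `f` satisfy a multiplicative lower bound:
for some `p ≥ 1`, `liminf_{n→∞, p∣n} e^{-n h_top(f)} #{x : f^n x = x} > 0`. -/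
def MultLowerBound (f : X → X) : Prop :=
  ∃ p : ℕ, 1 ≤ p ∧
    0 < Filter.liminf
      (fun n : ℕ => ENNReal.ofReal (Real.exp (-(n : ℝ) * (htop f).toReal)) *
        (periodicCount f n : ℝ≥0∞))
      (Filter.atTop ⊓ Filter.principal {n : ℕ | p ∣ n})

end MetricDyn

/-! ### Measure-theoretic (Kolmogorov–Sinai) entropy -/

section MeasDyn

variable {X : Type*} [MeasurableSpace X]

/-- A finite measurable partition of `X`, indexed by `Fin N`. -/
def IsMeasPartition {N : ℕ} (P : Fin N → Set X) : Prop :=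
  (∀ i, MeasurableSet (P i)) ∧ Pairwise (Function.onFun Disjoint P) ∧ (⋃ i, P i) = Set.univ

/-- Entropy of the `n`-th dynamical refinement of the partition `P`. -/
def dynHn (f : X → X) (μ : Measure X) {N : ℕ} (P : Fin N → Set X) (n : ℕ) : ℝ :=
  ∑ a : Fin n → Fin N,
    Real.negMulLog (μ (⋂ i : Fin n, f^[(i : ℕ)] ⁻¹' P (a i))).toReal

/-- Kolmogorov–Sinai entropy of `μ`:
`sup_P lim_n (1/n) H(⋁_{i<n} f^{-i} P) = sup_P inf_{n>0} (1/n) H_n(P)`. -/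
def ksEntropy (f : X → X) (μ : Measure X) : EReal :=
  ⨆ (N : ℕ) (P : Fin N → Set X) (_ : IsMeasPartition P),
    ((⨅ n : {n : ℕ // 0 < n}, dynHn f μ P (n : ℕ) / (n : ℝ) : ℝ) : EReal)

/-- An invariant Borel probability measure. -/
def IsInvariantProb (f : X → X) (μ : Measure X) : Prop :=
  IsProbabilityMeasure μ ∧ MeasurePreserving f μ μ

/-- A maximum measure : an ergodic invariant probability measure whose entropy
realizes the supremum of the entropies of all invariant probability measures. -/
def IsMaxMeasure (f : X → X) (μ : Measure X) : Prop :=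
  IsInvariantProb f μ ∧ Ergodic f μ ∧
    ∀ ν : Measure X, IsInvariantProb f ν → ksEntropy f ν ≤ ksEntropy f μ

end MeasDyn

/-! ### C^r sizes on a manifold, singular disks, dimensional entropies -/

/-- A `C^r` size on `M`, given by a finite atlas of `C^r`-compatible charts. -/
structure CrAtlasSize (r : ℕ∞) (d : ℕ) (M : Type*) [TopologicalSpace M]
    [ChartedSpace (Euc d) M] : Type _ where
  num : ℕ
  chart : Fin num → PartialHomeomorph M (Euc d)
  covers : ∀ x : M, ∃ i, x ∈ (chart i).source
  smooth_to : ∀ i, ContMDiffOn (𝓡 d) (𝓡 d) r (chart i) (chart i).source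
  smooth_symm : ∀ i, ContMDiffOn (𝓡 d) (𝓡 d) r (chart i).symm (chart i).target

section ManifoldDefs

variable {d : ℕ} {M : Type*} [TopologicalSpace M] [ChartedSpace (Euc d) M] {ρ : ℕ∞}

/-- The `C^s` size (finite `s`) of a parametrized disk `φ : Q^k → M`:
sup over points of the cube, inf over charts containing the image point, of the
maximal norm of the derivatives of order `≤ s` of the coordinate expressions. -/
def sizeNat (A : CrAtlasSize ρ d M) (s : ℕ) {k : ℕ} (φ : Euc k → M) : ℝ≥0∞ :=
  ⨆ t ∈ unitCube k,
    ⨅ i ∈ {i | φ t ∈ (A.chart i).source},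
      ⨆ j ∈ Finset.range (s + 1),
        (‖iteratedFDeriv ℝ j (fun u => A.chart i (φ u)) t‖₊ : ℝ≥0∞)

/-- The `C^s` size for `s ∈ ℕ∞`; for `s = ∞` it is the supremum of the finite sizes. -/
def diskSize (A : CrAtlasSize ρ d M) (s : ℕ∞) {k : ℕ} (φ : Euc k → M) : ℝ≥0∞ :=
  ⨆ j : {j : ℕ // (j : ℕ∞) ≤ s}, sizeNat A (j : ℕ) φ

/-- A `C^r` singular `k`-disk: a map `Q^k → M` which is `C^r` on a neighborhood
of the cube. -/
def IsCrDisk (d : ℕ) {M : Type*} [TopologicalSpace M] [ChartedSpace (Euc d) M]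
    (rr : ℕ∞) (k : ℕ) (φ : Euc k → M) : Prop :=
  ∃ U : Set (Euc k), IsOpen U ∧ unitCube k ⊆ U ∧ ContMDiffOn (𝓡 k) (𝓡 d) rr φ U

/-- The standard uniform family: all `C^r` singular `k`-disks of `C^r` size `≤ 1`. -/
def uniformDiskMaps (A : CrAtlasSize ρ d M) (rr : ℕ∞) (k : ℕ) : Set (Euc k → M) :=
  {φ | IsCrDisk d rr k φ ∧ diskSize A rr φ ≤ 1}

/-- The images `φ(Q^k)` of a family of parametrized disks. -/
def diskImages {k : ℕ} (D : Set (Euc k → M)) : Set (Set M) :=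
  (fun φ => φ '' unitCube k) '' D

end ManifoldDefs

section ManifoldEnt

variable {d : ℕ} {M : Type*} [MetricSpace M] [ChartedSpace (Euc d) M] {ρ : ℕ∞}

/-- `H^{k,C^r}_top(f)`: the uniform `C^r` `k`-dimensional entropy of `f`
(w.r.t. the `C^r` size `A`). For `rr = ⊤` this is `H^k_top(f)`. -/
def Hknt (A : CrAtlasSize ρ d M) (rr : ℕ∞) (k : ℕ) (f : M → M) : EReal :=
  unifEntColl f (diskImages (uniformDiskMaps A rr k))

/-- `h^{k,C^r}_top(f)`: the `C^r` `k`-dimensional entropy of `f`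
(supremum of the entropies of all `C^r` singular `k`-disks). -/
def hknt (rr : ℕ∞) (k : ℕ) (f : M → M) : EReal :=
  entColl f (diskImages {φ : Euc k → M | IsCrDisk d rr k φ})

/-- The unstable (entropy) dimension `d_u(f) = min {k : H^k_top(f) = h_top(f)}`. -/
def duDim (A : CrAtlasSize ρ d M) (f : M → M) : ℕ :=
  sInf {k : ℕ | Hknt A ⊤ k f = htop f}

/-- The stable dimension `d_s(f) = d_u(f⁻¹)` if `f` is a `C^r` diffeomorphism, `0` else. -/
def dsDim (A : CrAtlasSize ρ d M) (rr : ℕ∞) (f : M → M) : ℕ :=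
  letI : ∀ p : Prop, Decidable p := Classical.propDecidable
  if h : ∃ g : M → M, ContMDiff (𝓡 d) (𝓡 d) rr g ∧
      Function.LeftInverse g f ∧ Function.RightInverse g f
  then duDim A h.choose else 0

/-- `f` is entropy-expanding: `H^{d-1}_top(f) < h_top(f)`. -/
def EntropyExpanding (A : CrAtlasSize ρ d M) (f : M → M) : Prop :=
  Hknt A ⊤ (d - 1) f < htop f

/-- `f` is entropy-hyperbolic: `d_u(f) + d_s(f) = d`. -/
def EntropyHyperbolic (A : CrAtlasSize ρ d M) (rr : ℕ∞) (f : M → M) : Prop :=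
  duDim A f + dsDim A rr f = d

end ManifoldEnt

/-! ### Resolutions and resolution entropies -/

/-- `C^r` size of a self-map of `Q^k` (Euclidean version). -/
def eucMapSize (r : ℕ) {k : ℕ} (ψ : Euc k → Euc k) : ℝ≥0∞ :=
  ⨆ t ∈ unitCube k, ⨆ j ∈ Finset.range (r + 1), (‖iteratedFDeriv ℝ j ψ t‖₊ : ℝ≥0∞)

/-- `Ψ_ω = ψ_{σ^{|ω|-1}ω} ∘ ⋯ ∘ ψ_ω` where `σ` is the shift (tail) on words. -/
def bigPsi {k : ℕ} (ψ : List ℕ → Euc k → Euc k) : List ℕ → Euc k → Euc k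
  | [] => id
  | a :: w => bigPsi ψ w ∘ ψ (a :: w)

/-- The data of a candidate resolution: a finite set of words and maps `Q^k → Q^k`. -/
structure ResolutionData (k : ℕ) where
  words : Finset (List ℕ)
  map : List ℕ → Euc k → Euc k

section Resolutions

variable {d : ℕ} {M : Type*} [TopologicalSpace M] [ChartedSpace (Euc d) M] {ρ : ℕ∞}

/-- `R` is a `C^r`-resolution of order `n` of the singular disk `φ` (for the map `f`). -/
def IsResolution (A : CrAtlasSize ρ d M) (rr : ℕ) (f : M → M) {k : ℕ}
    (φ : Euc k → M) (n : ℕ) (R : ResolutionData k) : Prop :=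
  (∀ ω ∈ R.words, ω ≠ [] ∧ ω.length ≤ n) ∧
  (∀ ω ∈ R.words, ω.tail ≠ [] → ω.tail ∈ R.words) ∧
  (∀ ω ∈ R.words, ContDiff ℝ (rr : ℕ∞) (R.map ω) ∧
      Set.MapsTo (R.map ω) (unitCube k) (unitCube k) ∧ eucMapSize rr (R.map ω) ≤ 1) ∧
  (∀ ω ∈ R.words, diskSize A (rr : ℕ∞) (f^[ω.length] ∘ φ ∘ bigPsi R.map ω) ≤ 1) ∧
  unitCube k ⊆ ⋃ ω ∈ R.words.filter (fun ω => ω.length = n), bigPsi R.map ω '' unitCube k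

/-- The size of a resolution: the number of words of length `n`. -/
def resSize (n : ℕ) {k : ℕ} (R : ResolutionData k) : ℕ :=
  (R.words.filter fun ω => ω.length = n).card

/-- `R_f(C^r, n, φ)`: minimal size of a `C^r`-resolution of order `n` of `φ`. -/
def resNum (A : CrAtlasSize ρ d M) (rr : ℕ) (f : M → M) (n : ℕ) {k : ℕ}
    (φ : Euc k → M) : ℕ∞ :=
  sInf {m : ℕ∞ | ∃ R : ResolutionData k, IsResolution A rr f φ n R ∧ m = resSize n R}

/-- `R_f(C^r, n, D)` for a family `D` of disks. -/
def supResNum (A : CrAtlasSize ρ d M) (rr : ℕ) (f : M → M) (n : ℕ) {k : ℕ}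
    (D : Set (Euc k → M)) : ℕ∞ :=
  ⨆ φ ∈ D, resNum A rr f n φ

/-- Resolution entropy of a single disk. -/
def hResDisk (A : CrAtlasSize ρ d M) (rr : ℕ) (f : M → M) {k : ℕ} (φ : Euc k → M) : EReal :=
  Filter.atTop.limsup fun n : ℕ => (((n : ℝ)⁻¹ : ℝ) : EReal) * elog (resNum A rr f n φ)

/-- `h_{R,C^r}(f,D)`: resolution entropy of a family of disks. -/
def hResColl (A : CrAtlasSize ρ d M) (rr : ℕ) (f : M → M) {k : ℕ}
    (D : Set (Euc k → M)) : EReal :=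
  ⨆ φ ∈ D, hResDisk A rr f φ

/-- `H_{R,C^r}(f,D)`: uniform resolution entropy of a family of disks. -/
def HResColl (A : CrAtlasSize ρ d M) (rr : ℕ) (f : M → M) {k : ℕ}
    (D : Set (Euc k → M)) : EReal :=
  Filter.atTop.limsup fun n : ℕ => (((n : ℝ)⁻¹ : ℝ) : EReal) * elog (supResNum A rr f n D)

end Resolutions

/-! ### C^N closeness of maps (basis of the C^r topologies) -/

section Closeness

variable {d : ℕ} {M : Type*} [MetricSpace M] [ChartedSpace (Euc d) M] {ρ : ℕ∞}

/-- `g` is `δ`-close to `f` in the `C^N` sense, w.r.t. the finite atlas of `A`: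
uniformly `δ`-close, and with all derivatives of order `≤ N` of the coordinate
expressions `δ`-close wherever both are defined. -/
def CrClose (A : CrAtlasSize ρ d M) (N : ℕ) (δ : ℝ) (f g : M → M) : Prop :=
  (∀ x : M, dist (f x) (g x) < δ) ∧
  ∀ i j, ∀ t ∈ (A.chart i).target,
    f ((A.chart i).symm t) ∈ (A.chart j).source →
    g ((A.chart i).symm t) ∈ (A.chart j).source →
    ∀ s ≤ N,
      ‖iteratedFDeriv ℝ s (fun u => A.chart j (f ((A.chart i).symm u))) t
        - iteratedFDeriv ℝ s (fun u => A.chart j (g ((A.chart i).symm u))) t‖ < δ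

end Closeness

/-! ### Horseshoes -/

/-- The full two-sided shift on `N` symbols. -/
def fullShift (N : ℕ) : (ℤ → Fin N) → (ℤ → Fin N) := fun x i => x (i + 1)

/-- `Λ` is a horseshoe for `f`: a compact invariant set on which some iterate of `f`
is topologically conjugate to a full shift on finitely many symbols. -/
def IsHorseshoe {X : Type*} [MetricSpace X] (f : X → X) (Λ : Set X) : Prop :=
  IsCompact Λ ∧ f '' Λ = Λ ∧
  ∃ (m N : ℕ), 1 ≤ m ∧ 1 ≤ N ∧
    ∃ e : Λ ≃ₜ (ℤ → Fin N),
      ∀ x y : Λ, (y : X) = f^[m] (x : X) → e y = fullShift N (e x)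

/-- Identification of tangent vectors with Euclidean vectors. -/
def tanEuc {d : ℕ} {M : Type*} [TopologicalSpace M] [ChartedSpace (Euc d) M] {x : M}
    (v : TangentSpace (𝓡 d) x) : Euc d := v

end
noncomputable section


/-- The family of images of `C^∞` singular `k`-disks of size `≤ 1` inside a compact
set `K` of Euclidean `n`-space (here the identity chart serves as atlas). -/
def cubeFamily (n k : ℕ) (K : Set (Euc n)) : Set (Set ↥K) :=
  {S | ∃ φ : Euc k → Euc n,
    (∃ U : Set (Euc k), IsOpen U ∧ unitCube k ⊆ U ∧ ContDiffOn ℝ (⊤ : ℕ∞) φ U) ∧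
    (∀ s : ℕ, 1 ≤ s → ∀ t ∈ unitCube k, ‖iteratedFDeriv ℝ s φ t‖ ≤ 1) ∧
    (∀ t ∈ unitCube k, φ t ∈ K) ∧
    S = {x : ↥K | ∃ t ∈ unitCube k, φ t = (x : Euc n)}}

/-- `H^k_top` of a self-map of a compact subset `K ⊆ ℝ^n`. -/
def HkCube (n k : ℕ) {K : Set (Euc n)} (F : ↥K → ↥K) : EReal :=
  unifEntColl F (cubeFamily n k K)

/-! ### Part C: counting grid boxes that meet an algebraic hypersurface -/

theorem pc_finrank_restrictDegree (k m : ℕ) :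
    Module.finrank ℝ (MvPolynomial.restrictDegree (Fin k) ℝ m) = (m + 1) ^ k := by
  have e : {s : Fin k →₀ ℕ | ∀ i, s i ≤ m} ≃ (Fin k → Fin (m + 1)) :=
    { toFun := fun s i => ⟨s.1 i, Nat.lt_succ_of_le (s.2 i)⟩
      invFun := fun v => ⟨Finsupp.equivFunOnFinite.symm fun i => (v i : ℕ), by
        intro i; simpa using Nat.le_of_lt_succ (v i).2⟩
      left_inv := by intro s; ext i; simp
      right_inv := by intro v; ext i; simp }
  have b := (MvPolynomial.basisRestrictSupport ℝ {s : Fin k →₀ ℕ | ∀ i, s i ≤ m}).reindex e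
  have := Module.finrank_eq_card_basis b
  exact this.trans (by simp)

theorem pc_totalDegree_aeval_le {k q : ℕ} (d E : ℕ) (P : Fin q → MvPolynomial (Fin k) ℝ)
    (hP : ∀ i, (P i).totalDegree ≤ d) (A : MvPolynomial (Fin q) ℝ)
    (hA : ∀ s ∈ A.support, ∀ i, s i ≤ E) :
    (MvPolynomial.aeval P A).totalDegree ≤ q * E * d := by
  rw [MvPolynomial.aeval_def, MvPolynomial.eval₂_eq']
  refine MvPolynomial.totalDegree_finsetSum_le fun s hs => ?_
  refine (MvPolynomial.totalDegree_mul _ _).trans ?_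
  have h1 : (algebraMap ℝ (MvPolynomial (Fin k) ℝ) (MvPolynomial.coeff s A)).totalDegree = 0 := by
    rw [MvPolynomial.algebraMap_eq, MvPolynomial.totalDegree_C]
  rw [h1, zero_add]
  refine (MvPolynomial.totalDegree_finsetProd _ _).trans ?_
  calc ∑ i, (P i ^ s i).totalDegree ≤ ∑ i : Fin q, E * d := by
        refine Finset.sum_le_sum fun i _ => ?_
        exact (MvPolynomial.totalDegree_pow _ _).trans (Nat.mul_le_mul (hA s hs i) (hP i))
    _ = q * E * d := by simp [mul_assoc]

theorem pc_alg_dep {k q : ℕ} (d E : ℕ) (P : Fin q → MvPolynomial (Fin k) ℝ)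
    (hP : ∀ i, (P i).totalDegree ≤ d) (h : (q * E * d + 1) ^ k < (E + 1) ^ q) :
    ∃ A : MvPolynomial (Fin q) ℝ, A ≠ 0 ∧ (∀ s ∈ A.support, ∀ i, s i ≤ E) ∧
      MvPolynomial.aeval P A = 0 := by
  have hmem : ∀ A ∈ MvPolynomial.restrictDegree (Fin q) ℝ E,
      (MvPolynomial.aeval P).toLinearMap A ∈
        MvPolynomial.restrictDegree (Fin k) ℝ (q * E * d) := by
    intro A hA
    rw [MvPolynomial.mem_restrictDegree] at hA
    apply MvPolynomial.restrictTotalDegree_le_restrictDegree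
    rw [MvPolynomial.mem_restrictTotalDegree]
    exact pc_totalDegree_aeval_le d E P hP A hA
  let T := (MvPolynomial.aeval P).toLinearMap.restrict hmem
  have hker : LinearMap.ker T ≠ ⊥ := by
    apply LinearMap.ker_ne_bot_of_finrank_lt
    rw [pc_finrank_restrictDegree, pc_finrank_restrictDegree]
    exact h
  obtain ⟨A, hA, hA0⟩ := Submodule.exists_mem_ne_zero_of_ne_bot hker
  refine ⟨A.1, fun h0 => hA0 (Subtype.ext h0), (MvPolynomial.mem_restrictDegree _ _ _).1 A.2, ?_⟩
  have := congrArg Subtype.val (LinearMap.mem_ker.1 hA)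
  simpa [T] using this

theorem pc_alg_dep' {k : ℕ} (d : ℕ) (P : Fin (k + 1) → MvPolynomial (Fin k) ℝ)
    (hP : ∀ i, (P i).totalDegree ≤ d) :
    ∃ A : MvPolynomial (Fin (k + 1)) ℝ, A ≠ 0 ∧
      (∀ s ∈ A.support, ∀ i, s i ≤ ((k + 1) * d + 1) ^ k) ∧ MvPolynomial.aeval P A = 0 := by
  refine pc_alg_dep d _ P hP ?_
  set E := ((k + 1) * d + 1) ^ k with hE
  calc ((k + 1) * E * d + 1) ^ k ≤ (((k + 1) * d + 1) * (E + 1)) ^ k := by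
        apply Nat.pow_le_pow_left; nlinarith [Nat.zero_le E, Nat.zero_le ((k+1)*d)]
    _ = E * (E + 1) ^ k := by rw [mul_pow]
    _ < (E + 1) * (E + 1) ^ k := by
        apply Nat.mul_lt_mul_of_pos_right (Nat.lt_succ_self _); positivity
    _ = (E + 1) ^ (k + 1) := by ring

theorem pc_totalDegree_pderiv {n : ℕ} (i : Fin n) (p : MvPolynomial (Fin n) ℝ) :
    (MvPolynomial.pderiv i p).totalDegree ≤ p.totalDegree := by
  conv_lhs => rw [p.as_sum, map_sum]
  refine MvPolynomial.totalDegree_finsetSum_le fun s hs => ?_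
  rw [MvPolynomial.pderiv_monomial]
  refine (MvPolynomial.totalDegree_monomial_le _ _).trans ?_
  refine le_trans ?_ (MvPolynomial.le_totalDegree hs)
  rw [Finsupp.sum_fintype _ _ (by simp), Finsupp.sum_fintype _ _ (by simp)]
  refine Finset.sum_le_sum fun j _ => ?_
  simp

theorem pc_hasDerivAt {n : ℕ} (H : MvPolynomial (Fin n) ℝ) (x : Fin n → ℝ) (i : Fin n) (t : ℝ) :
    HasDerivAt (fun t => MvPolynomial.eval (Function.update x i t) H)
      (MvPolynomial.eval (Function.update x i t) (MvPolynomial.pderiv i H)) t := by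
  induction H using MvPolynomial.induction_on with
  | C a => simpa using hasDerivAt_const t a
  | add p q hp hq =>
    simp only [map_add]
    exact hp.add hq
  | mul_X p j hp =>
    have hX : HasDerivAt (fun t => Function.update x i t j) (if j = i then 1 else 0) t := by
      by_cases hj : j = i
      · subst hj
        simp only [Function.update_self, if_true]
        exact hasDerivAt_id' t
      · simpa [hj] using hasDerivAt_const t (x j)
    have := hp.mul hX
    simp only [map_mul, MvPolynomial.eval_X, Derivation.leibniz, MvPolynomial.pderiv_X,
      smul_eq_mul, map_add]
    convert! this using 1
    by_cases hj : j = i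
    · subst hj; simp; ring
    · simp [hj, Pi.single_apply, Ne.symm hj]; ring

theorem pc_critical {n : ℕ} (G : MvPolynomial (Fin n) ℝ) (lo hi : Fin n → ℝ)
    (hzero : ∃ x, (∀ i, lo i ≤ x i ∧ x i ≤ hi i) ∧ MvPolynomial.eval x G = 0)
    (hbd : ∀ x, (∀ i, lo i ≤ x i ∧ x i ≤ hi i) → (∃ i, x i = lo i ∨ x i = hi i) →
      MvPolynomial.eval x G ≠ 0) :
    ∃ η > 0, ∀ v : Fin n → ℝ, (∀ i, |v i| < η) → ∃ x, (∀ i, lo i < x i ∧ x i < hi i) ∧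
      ∀ i, MvPolynomial.eval x (MvPolynomial.pderiv i (G ^ 2)) = v i := by
  obtain ⟨x0, hx0, hG0⟩ := hzero
  have hboxc : IsCompact (Icc lo hi) := isCompact_Icc
  have hcont : ∀ p : MvPolynomial (Fin n) ℝ, Continuous fun x => MvPolynomial.eval x p :=
    fun p => MvPolynomial.continuous_eval p
  set bd : Set (Fin n → ℝ) := Icc lo hi ∩ ⋃ i, {x | x i = lo i ∨ x i = hi i} with hbddef
  have hbdc : IsCompact bd := by
    refine hboxc.inter_right (isClosed_iUnion_of_finite fun i => ?_)
    exact (isClosed_eq (continuous_apply i) continuous_const).union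
      (isClosed_eq (continuous_apply i) continuous_const)
  obtain ⟨μ, hμ, hμbd⟩ : ∃ μ > 0, ∀ x ∈ bd, μ ≤ MvPolynomial.eval x (G ^ 2) := by
    by_cases hne : bd.Nonempty
    · obtain ⟨y, hy, hymin⟩ := hbdc.exists_isMinOn hne (hcont (G ^ 2)).continuousOn
      refine ⟨MvPolynomial.eval y (G ^ 2), ?_, fun x hx => hymin hx⟩
      have h1 := hbd y (fun i => ⟨hy.1.1 i, hy.1.2 i⟩) (by simpa using hy.2)
      simp only [map_pow]; positivity
    · exact ⟨1, one_pos, fun x hx => (hne ⟨x, hx⟩).elim⟩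
  set R : ℝ := ∑ i, (hi i - lo i) with hR
  have hlh : ∀ i, 0 ≤ hi i - lo i := fun i => by linarith [(hx0 i).1, (hx0 i).2]
  have hR0 : 0 ≤ R := Finset.sum_nonneg fun i _ => hlh i
  refine ⟨μ / (R + 1), by positivity, fun v hv => ?_⟩
  set H : MvPolynomial (Fin n) ℝ := G ^ 2 - ∑ j, MvPolynomial.C (v j) * MvPolynomial.X j with hH
  have hHe : ∀ x, MvPolynomial.eval x H = MvPolynomial.eval x (G ^ 2) - ∑ j, v j * x j := by
    intro x; simp [hH]
  have hx0box : x0 ∈ Icc lo hi := ⟨fun i => (hx0 i).1, fun i => (hx0 i).2⟩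
  obtain ⟨y, hy, hymin⟩ := hboxc.exists_isMinOn ⟨x0, hx0box⟩ (hcont H).continuousOn
  have hmin : ∀ x ∈ Icc lo hi, MvPolynomial.eval y H ≤ MvPolynomial.eval x H := fun x hx => hymin hx
  have hynb : y ∉ bd := by
    intro hyb
    have h1 := hmin x0 hx0box
    rw [hHe, hHe] at h1
    have h2 := hμbd y hyb
    have h3 : MvPolynomial.eval x0 (G ^ 2) = 0 := by simp [hG0]
    have h4 : ∑ j, v j * y j - ∑ j, v j * x0 j ≤ μ / (R + 1) * R := by
      rw [← Finset.sum_sub_distrib, hR, Finset.mul_sum]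
      refine Finset.sum_le_sum fun j _ => ?_
      rw [← mul_sub]
      have h5 : |y j - x0 j| ≤ hi j - lo j := by
        rw [abs_le]; constructor <;> linarith [(hx0 j).1, (hx0 j).2, hy.1 j, hy.2 j]
      calc v j * (y j - x0 j) ≤ |v j * (y j - x0 j)| := le_abs_self _
        _ = |v j| * |y j - x0 j| := abs_mul _ _
        _ ≤ _ := mul_le_mul (hv j).le h5 (abs_nonneg _) (by positivity)
    have h6 : μ / (R + 1) * R < μ := by
      rw [div_mul_eq_mul_div, div_lt_iff₀ (by positivity)]; nlinarith
    linarith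
  have hyint : ∀ i, lo i < y i ∧ y i < hi i := by
    intro i
    have : ¬ (y i = lo i ∨ y i = hi i) := fun h => hynb ⟨hy, mem_iUnion.2 ⟨i, h⟩⟩
    push Not at this
    exact ⟨lt_of_le_of_ne (hy.1 i) (Ne.symm this.1), lt_of_le_of_ne (hy.2 i) this.2⟩
  refine ⟨y, hyint, fun i => ?_⟩
  have hd := pc_hasDerivAt H y i (y i)
  have hloc : IsLocalMin (fun t => MvPolynomial.eval (Function.update y i t) H) (y i) := by
    filter_upwards [Ioo_mem_nhds (hyint i).1 (hyint i).2] with t ht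
    rw [Function.update_eq_self]
    apply hmin
    constructor
    · intro j
      by_cases hj : j = i
      · subst hj; simpa using ht.1.le
      · simpa [hj] using hy.1 j
    · intro j
      by_cases hj : j = i
      · subst hj; simpa using ht.2.le
      · simpa [hj] using hy.2 j
  have h0 := hloc.hasDerivAt_eq_zero hd
  rw [Function.update_eq_self] at h0
  have h7 : MvPolynomial.pderiv i H = MvPolynomial.pderiv i (G ^ 2) - MvPolynomial.C (v i) := by
    rw [hH, map_sub, map_sum]
    congr 1
    rw [Finset.sum_eq_single i]
    · simp [Derivation.leibniz, MvPolynomial.pderiv_X]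
    · intro j _ hj
      simp [Derivation.leibniz, MvPolynomial.pderiv_X, Pi.single_apply, hj, Ne.symm hj]
    · simp
  rw [h7] at h0
  simp only [map_sub, MvPolynomial.eval_C] at h0
  linarith

theorem pc_interior {n g : ℕ} (G : MvPolynomial (Fin n) ℝ) (hG : G.totalDegree ≤ g)
    {ι : Type*} (B : Finset ι) (lo hi : ι → Fin n → ℝ)
    (hdisj : ∀ b ∈ B, ∀ b' ∈ B, b ≠ b' → ∃ i, hi b i ≤ lo b' i ∨ hi b' i ≤ lo b i)
    (hzero : ∀ b ∈ B, ∃ x, (∀ i, lo b i ≤ x i ∧ x i ≤ hi b i) ∧ MvPolynomial.eval x G = 0)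
    (hbd : ∀ b ∈ B, ∀ x, (∀ i, lo b i ≤ x i ∧ x i ≤ hi b i) →
      (∃ i, x i = lo b i ∨ x i = hi b i) → MvPolynomial.eval x G ≠ 0) :
    B.card ≤ (((n + 1) * (2 * g + 1) + 1) ^ n) ^ n := by
  classical
  set E := ((n + 1) * (2 * g + 1) + 1) ^ n with hE
  have hG2 : (G ^ 2).totalDegree ≤ 2 * g :=
    (MvPolynomial.totalDegree_pow _ _).trans (Nat.mul_le_mul_left _ hG)
  have hA : ∀ i : Fin n, ∃ A : MvPolynomial (Fin (n + 1)) ℝ, A ≠ 0 ∧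
      (∀ s ∈ A.support, ∀ i, s i ≤ E) ∧
      MvPolynomial.aeval (Fin.cons (MvPolynomial.X i)
        (fun j => MvPolynomial.pderiv j (G ^ 2)) : Fin (n + 1) → MvPolynomial (Fin n) ℝ) A = 0 := by
    intro i
    apply pc_alg_dep'
    intro j
    refine Fin.cases ?_ (fun j => ?_) j
    · simp
    · simp only [Fin.cons_succ]
      exact (pc_totalDegree_pderiv _ _).trans (hG2.trans (Nat.le_succ _))
  choose A hA0 hAE hAdep using hA
  set c : Fin n → MvPolynomial (Fin n) ℝ :=
    fun i => (MvPolynomial.finSuccEquiv ℝ n (A i)).leadingCoeff with hc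
  have hc0 : ∀ i, c i ≠ 0 := by
    intro i
    simp only [hc, ne_eq, Polynomial.leadingCoeff_eq_zero]
    simpa using hA0 i
  have hη : ∃ η > 0, ∀ b ∈ B, ∀ v : Fin n → ℝ, (∀ i, |v i| < η) →
      ∃ x, (∀ i, lo b i < x i ∧ x i < hi b i) ∧
      ∀ i, MvPolynomial.eval x (MvPolynomial.pderiv i (G ^ 2)) = v i := by
    have h1 : ∀ b : B, ∃ η > 0, ∀ v : Fin n → ℝ, (∀ i, |v i| < η) →
      ∃ x, (∀ i, lo b i < x i ∧ x i < hi b i) ∧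
      ∀ i, MvPolynomial.eval x (MvPolynomial.pderiv i (G ^ 2)) = v i :=
      fun b => pc_critical G _ _ (hzero b b.2) (hbd b b.2)
    choose η hη0 hη using h1
    by_cases hne : (Finset.univ : Finset B).Nonempty
    · refine ⟨Finset.univ.inf' hne η, ?_, fun b hb v hv => hη ⟨b, hb⟩ v fun i => ?_⟩
      · simp [Finset.lt_inf'_iff, hη0]
      · exact (hv i).trans_le (Finset.inf'_le _ (Finset.mem_univ _))
    · refine ⟨1, one_pos, fun b hb => ?_⟩
      exact (hne ⟨⟨b, hb⟩, Finset.mem_univ _⟩).elim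
  obtain ⟨η, hη0, hη⟩ := hη
  obtain ⟨v, hv, hvc⟩ : ∃ v : Fin n → ℝ, (∀ i, |v i| < η) ∧
      ∀ i, MvPolynomial.eval v (c i) ≠ 0 := by
    by_contra hcon
    push Not at hcon
    have hprod : ∏ i, c i = 0 := by
      apply MvPolynomial.funext_set (fun _ => Ioo 0 η) (fun _ => Ioo_infinite hη0)
      intro x hx
      obtain ⟨i, hi⟩ := hcon x (fun i => by
        have := hx i (mem_univ i)
        rw [abs_of_pos this.1]; exact this.2)
      rw [map_prod, map_zero]
      exact Finset.prod_eq_zero (Finset.mem_univ i) hi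
    exact (Finset.prod_ne_zero_iff.2 fun i _ => hc0 i) hprod
  have hx : ∀ b : B, ∃ x : Fin n → ℝ, (∀ i, lo b i < x i ∧ x i < hi b i) ∧
      ∀ i, MvPolynomial.eval x (MvPolynomial.pderiv i (G ^ 2)) = v i :=
    fun b => hη b b.2 v hv
  choose x hxint hxv using hx
  set p : Fin n → Polynomial ℝ :=
    fun i => Polynomial.map (MvPolynomial.eval v) (MvPolynomial.finSuccEquiv ℝ n (A i)) with hp
  have hp0 : ∀ i, p i ≠ 0 := by
    intro i h0
    have := congrArg (fun q => Polynomial.coeff q (MvPolynomial.finSuccEquiv ℝ n (A i)).natDegree) h0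
    simp only [hp, Polynomial.coeff_map, Polynomial.coeff_zero] at this
    exact hvc i this
  have hpdeg : ∀ i, (p i).natDegree ≤ E := by
    intro i
    refine Polynomial.natDegree_map_le.trans ?_
    rw [MvPolynomial.natDegree_finSuccEquiv, MvPolynomial.degreeOf_le_iff]
    exact fun s hs => hAE i s hs 0
  have hroot : ∀ b i, x b i ∈ (p i).roots.toFinset := by
    intro b i
    rw [Multiset.mem_toFinset, Polynomial.mem_roots (hp0 i), Polynomial.IsRoot.def]
    simp only [hp]
    rw [← MvPolynomial.eval_eq_eval_mv_eval']
    have h1 := congrArg (MvPolynomial.eval (x b)) (hAdep i)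
    rw [map_zero, ← MvPolynomial.coe_aeval_eq_eval, RingHom.coe_coe, ← AlgHom.comp_apply,
      MvPolynomial.comp_aeval] at h1
    rw [← h1, ← MvPolynomial.coe_aeval_eq_eval, RingHom.coe_coe]
    congr 2
    funext j
    refine Fin.cases ?_ (fun j => ?_) j
    · simp
    · simp only [Fin.cons_succ]
      rw [← hxv b j, ← MvPolynomial.coe_aeval_eq_eval]; rfl
  have hcard : Fintype.card B ≤
      (Fintype.piFinset fun i => (p i).roots.toFinset).card := by
    rw [← Finset.card_univ]
    apply Finset.card_le_card_of_injOn x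
    · intro b _
      simp only [Finset.mem_coe, Fintype.mem_piFinset]
      exact fun i => hroot b i
    · intro b _ b' _ hbb
      by_contra hne
      obtain ⟨i, hi⟩ := hdisj b b.2 b' b'.2 (fun h => hne (Subtype.ext h))
      have h1 := hxint b i
      have h2 := hxint b' i
      rw [hbb] at h1
      rcases hi with h | h <;> linarith [h1.1, h1.2, h2.1, h2.2]
  rw [Fintype.card_coe] at hcard
  refine hcard.trans ?_
  rw [Fintype.card_piFinset]
  calc ∏ i, ((p i).roots.toFinset).card ≤ ∏ _i : Fin n, E := by
        refine Finset.prod_le_prod' fun i _ => ?_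
        exact (Multiset.toFinset_card_le _).trans ((Polynomial.card_roots' _).trans (hpdeg i))
    _ = E ^ n := by simp

theorem pc_totalDegree_aeval_le' {k q : ℕ} (P : Fin q → MvPolynomial (Fin k) ℝ)
    (hP : ∀ i, (P i).totalDegree ≤ 1) (A : MvPolynomial (Fin q) ℝ) :
    (MvPolynomial.aeval P A).totalDegree ≤ A.totalDegree := by
  rw [MvPolynomial.aeval_def, MvPolynomial.eval₂_eq']
  refine MvPolynomial.totalDegree_finsetSum_le fun s hs => ?_
  refine (MvPolynomial.totalDegree_mul _ _).trans ?_
  have h1 : (algebraMap ℝ (MvPolynomial (Fin k) ℝ) (MvPolynomial.coeff s A)).totalDegree = 0 := by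
    rw [MvPolynomial.algebraMap_eq, MvPolynomial.totalDegree_C]
  rw [h1, zero_add]
  refine (MvPolynomial.totalDegree_finsetProd _ _).trans ?_
  refine le_trans ?_ (MvPolynomial.le_totalDegree hs)
  rw [Finsupp.sum_fintype _ _ (by simp)]
  refine Finset.sum_le_sum fun i _ => ?_
  refine (MvPolynomial.totalDegree_pow _ _).trans ?_
  calc s i * (P i).totalDegree ≤ s i * 1 := Nat.mul_le_mul_left _ (hP i)
    _ = s i := mul_one _

theorem pc_natDegree_aeval_le {q : ℕ} (P : Fin q → Polynomial ℝ)
    (hP : ∀ i, (P i).natDegree ≤ 1) (A : MvPolynomial (Fin q) ℝ) :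
    (MvPolynomial.aeval P A).natDegree ≤ A.totalDegree := by
  rw [MvPolynomial.aeval_def, MvPolynomial.eval₂_eq']
  refine Polynomial.natDegree_sum_le_of_forall_le _ _ fun s hs => ?_
  refine Polynomial.natDegree_mul_le.trans ?_
  have h1 : (algebraMap ℝ (Polynomial ℝ) (MvPolynomial.coeff s A)).natDegree = 0 := by
    rw [Polynomial.algebraMap_eq, Polynomial.natDegree_C]
  rw [h1, zero_add]
  refine (Polynomial.natDegree_prod_le _ _).trans ?_
  refine le_trans ?_ (MvPolynomial.le_totalDegree hs)
  rw [Finsupp.sum_fintype _ _ (by simp)]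
  refine Finset.sum_le_sum fun i _ => ?_
  refine Polynomial.natDegree_pow_le.trans ?_
  calc s i * (P i).natDegree ≤ s i * 1 := Nat.mul_le_mul_left _ (hP i)
    _ = s i := mul_one _

/-- restriction of a polynomial to a coordinate hyperplane -/
def pcRes {n : ℕ} (i : Fin (n + 1)) (t : ℝ) (G : MvPolynomial (Fin (n + 1)) ℝ) :
    MvPolynomial (Fin n) ℝ :=
  MvPolynomial.aeval (i.insertNth (MvPolynomial.C t) MvPolynomial.X :
    Fin (n + 1) → MvPolynomial (Fin n) ℝ) G

theorem pcRes_degree {n : ℕ} (i : Fin (n + 1)) (t : ℝ) (G : MvPolynomial (Fin (n + 1)) ℝ) :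
    (pcRes i t G).totalDegree ≤ G.totalDegree := by
  apply pc_totalDegree_aeval_le'
  intro j
  refine Fin.succAboveCases i ?_ (fun j => ?_) j
  · simp
  · simp

theorem pcRes_eval {n : ℕ} (i : Fin (n + 1)) (t : ℝ) (G : MvPolynomial (Fin (n + 1)) ℝ)
    (x : Fin n → ℝ) :
    MvPolynomial.eval x (pcRes i t G) = MvPolynomial.eval (i.insertNth t x : Fin (n + 1) → ℝ) G := by
  unfold pcRes
  rw [← MvPolynomial.coe_aeval_eq_eval, RingHom.coe_coe, ← AlgHom.comp_apply,
      MvPolynomial.comp_aeval, ← MvPolynomial.coe_aeval_eq_eval, RingHom.coe_coe]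
  congr 2
  funext j
  refine Fin.succAboveCases i ?_ (fun j => ?_) j
  · simp
  · simp

theorem pcRes_zero {n : ℕ} (i : Fin (n + 1)) (G : MvPolynomial (Fin (n + 1)) ℝ) (hG : G ≠ 0)
    (g : ℕ) (hg : G.totalDegree ≤ g) (Z : Finset ℝ) (hZ : ∀ t ∈ Z, pcRes i t G = 0) :
    Z.card ≤ g := by
  classical
  obtain ⟨x, hx⟩ : ∃ x, MvPolynomial.eval x G ≠ 0 := by
    by_contra h
    push Not at h
    exact hG (MvPolynomial.funext (by simpa using h))
  set P : Fin (n + 1) → Polynomial ℝ :=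
    i.insertNth Polynomial.X (fun j => Polynomial.C (x (i.succAbove j))) with hP
  set Q := MvPolynomial.aeval P G with hQ
  have hev : ∀ t, Q.eval t = MvPolynomial.eval (i.insertNth t (fun j => x (i.succAbove j)) :
      Fin (n + 1) → ℝ) G := by
    intro t
    rw [hQ, ← Polynomial.coe_aeval_eq_eval, ← AlgHom.coe_toRingHom]
    change (Polynomial.aeval t) (MvPolynomial.aeval P G) = _
    rw [← AlgHom.comp_apply,
      MvPolynomial.comp_aeval, ← MvPolynomial.coe_aeval_eq_eval, RingHom.coe_coe]
    congr 2
    funext j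
    refine Fin.succAboveCases i ?_ (fun j => ?_) j
    · simp [hP]
    · simp [hP]
  have hQ0 : Q ≠ 0 := by
    intro h0
    apply hx
    have := hev (x i)
    rw [h0, Polynomial.eval_zero] at this
    rw [this]
    congr 1
    congr 1
    funext j
    refine Fin.succAboveCases i ?_ (fun j => ?_) j
    · simp
    · simp
  have hdeg : Q.natDegree ≤ g := by
    refine (pc_natDegree_aeval_le P (fun j => ?_) G).trans hg
    refine Fin.succAboveCases i ?_ (fun j => ?_) j
    · simp [hP]
    · simp [hP]
  have hsub : Z ⊆ Q.roots.toFinset := by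
    intro t ht
    rw [Multiset.mem_toFinset, Polynomial.mem_roots hQ0, Polynomial.IsRoot.def, hev, ← pcRes_eval,
      hZ t ht, map_zero]
  exact (Finset.card_le_card hsub).trans ((Multiset.toFinset_card_le _).trans
    ((Polynomial.card_roots' _).trans hdeg))

def pcK : ℕ → ℕ → ℕ
  | 0, _ => 0
  | n + 1, g => (n + 1) * (2 * g + 2 * pcK n g) + (((n + 2) * (2 * g + 1) + 1) ^ (n + 1)) ^ (n + 1)

theorem pcK_bound (n : ℕ) : ∃ c q : ℕ, ∀ g, pcK n g ≤ c * (g + 1) ^ q := by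
  induction n with
  | zero => exact ⟨0, 0, fun g => by simp [pcK]⟩
  | succ n ih =>
    obtain ⟨c, q, h⟩ := ih
    set r := (n + 1) * (n + 1) with hr
    refine ⟨(n + 1) * (2 + 2 * c) + (3 * (n + 2)) ^ r, q + 1 + r, fun g => ?_⟩
    simp only [pcK]
    have h1 : (((n + 2) * (2 * g + 1) + 1) ^ (n + 1)) ^ (n + 1) ≤
        (3 * (n + 2)) ^ r * (g + 1) ^ (q + 1 + r) := by
      rw [← pow_mul, ← hr]
      calc ((n + 2) * (2 * g + 1) + 1) ^ r ≤ ((3 * (n + 2)) * (g + 1)) ^ r := by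
            apply Nat.pow_le_pow_left; nlinarith
        _ = (3 * (n + 2)) ^ r * (g + 1) ^ r := mul_pow _ _ _
        _ ≤ _ := Nat.mul_le_mul_left _ (Nat.pow_le_pow_right (by omega) (by omega))
    have h2 : 2 * g + 2 * pcK n g ≤ (2 + 2 * c) * (g + 1) ^ (q + 1 + r) := by
      have h3 : g ≤ (g + 1) ^ (q + 1 + r) :=
        (Nat.le_succ g).trans (Nat.le_self_pow (by omega) _)
      have h4 : pcK n g ≤ c * (g + 1) ^ (q + 1 + r) :=
        (h g).trans (Nat.mul_le_mul_left _ (Nat.pow_le_pow_right (by omega) (by omega)))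
      nlinarith
    calc _ ≤ (n + 1) * ((2 + 2 * c) * (g + 1) ^ (q + 1 + r)) +
          (3 * (n + 2)) ^ r * (g + 1) ^ (q + 1 + r) :=
          Nat.add_le_add (Nat.mul_le_mul_left _ h2) h1
      _ = _ := by ring

/-- boxes (all on one side) touching a given face -/
theorem pc_face {n g K : ℕ}
    (ih : ∀ (G : MvPolynomial (Fin n) ℝ), G ≠ 0 → G.totalDegree ≤ g →
      ∀ (p : Fin n → ℕ → ℝ), (∀ j, StrictMono (p j)) → ∀ (N : Fin n → ℕ) (T : ℕ),
      (∀ i, ∏ j ∈ Finset.univ.erase i, (N j + 1) ≤ T) → ∀ (B : Finset (Fin n → ℕ)),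
      (∀ v ∈ B, ∀ i, v i < N i) →
      (∀ v ∈ B, ∃ x, (∀ i, p i (v i) ≤ x i ∧ x i ≤ p i (v i + 1)) ∧ MvPolynomial.eval x G = 0) →
      B.card ≤ K * T)
    (G : MvPolynomial (Fin (n + 1)) ℝ) (hdeg : G.totalDegree ≤ g)
    (p : Fin (n + 1) → ℕ → ℝ) (hp : ∀ j, StrictMono (p j)) (N : Fin (n + 1) → ℕ) (T : ℕ)
    (hT : ∀ i, ∏ j ∈ Finset.univ.erase i, (N j + 1) ≤ T) (i : Fin (n + 1)) (t : ℝ) (c : ℕ)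
    (B : Finset (Fin (n + 1) → ℕ)) (hB : ∀ v ∈ B, ∀ i, v i < N i) (hc : ∀ v ∈ B, v i = c)
    (hz : ∀ v ∈ B, ∃ x, (∀ i, p i (v i) ≤ x i ∧ x i ≤ p i (v i + 1)) ∧ x i = t ∧
      MvPolynomial.eval x G = 0) :
    (pcRes i t G ≠ 0 → B.card ≤ K * (T / (N i + 1))) ∧ B.card ≤ T := by
  classical
  have hinj : Set.InjOn (fun v : Fin (n + 1) → ℕ => i.removeNth v) B := by
    intro v hv w hw h
    funext j
    refine Fin.succAboveCases i ?_ (fun j => ?_) j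
    · rw [hc v hv, hc w hw]
    · exact congrFun h j
  have herase : ∀ h : Fin (n + 1) → ℕ,
      ∏ j ∈ Finset.univ.erase i, h j = ∏ j, h (i.succAbove j) := by
    intro h
    rw [← Finset.compl_singleton, ← Fin.image_succAbove_univ,
      Finset.prod_image (fun a _ b _ hab => Fin.succAbove_right_injective hab)]
  constructor
  · intro hne
    rw [← Finset.card_image_of_injOn hinj]
    refine ih (pcRes i t G) hne ((pcRes_degree i t G).trans hdeg) (fun j => p (i.succAbove j))
      (fun j => hp _) (fun j => N (i.succAbove j)) _ ?_ _ ?_ ?_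
    · intro k
      rw [Nat.le_div_iff_mul_le (Nat.succ_pos _)]
      refine le_trans (le_of_eq ?_) (hT (i.succAbove k))
      have h1 : ∀ h : Fin (n + 1) → ℕ, (∏ j ∈ Finset.univ.erase k, h (i.succAbove j)) * h i =
          ∏ j ∈ Finset.univ.erase (i.succAbove k), h j := by
        intro h
        have : (Finset.univ.erase (i.succAbove k) : Finset (Fin (n + 1))) =
            insert i ((Finset.univ.erase k).image i.succAbove) := by
          ext j
          refine Fin.succAboveCases i ?_ (fun j => ?_) j
          · simp [Fin.succAbove_ne, Ne.symm (Fin.succAbove_ne i k)]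
          · simp [Fin.succAbove_ne]
        rw [this, Finset.prod_insert (by simp [Fin.succAbove_ne]),
          Finset.prod_image (fun a _ b _ hab => Fin.succAbove_right_injective hab), mul_comm]
      exact h1 (fun j => N j + 1)
    · intro w hw j
      obtain ⟨v, hv, rfl⟩ := Finset.mem_image.1 hw
      exact hB v hv _
    · intro w hw
      obtain ⟨v, hv, rfl⟩ := Finset.mem_image.1 hw
      obtain ⟨x, hx, hxi, hxG⟩ := hz v hv
      refine ⟨i.removeNth x, fun j => hx _, ?_⟩
      rw [pcRes_eval, ← hxi, Fin.insertNth_self_removeNth, hxG]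
  · rw [← Finset.card_image_of_injOn hinj]
    have hsub : B.image (fun v : Fin (n + 1) → ℕ => i.removeNth v) ⊆
        Fintype.piFinset fun j => Finset.range (N (i.succAbove j)) := by
      intro w hw
      obtain ⟨v, hv, rfl⟩ := Finset.mem_image.1 hw
      simp only [Fintype.mem_piFinset, Finset.mem_range]
      exact fun j => hB v hv _
    refine (Finset.card_le_card hsub).trans ?_
    rw [Fintype.card_piFinset]
    refine le_trans ?_ (hT i)
    rw [herase]
    refine Finset.prod_le_prod' fun j _ => ?_
    simp

theorem pc_box (n : ℕ) : ∀ (g : ℕ) (G : MvPolynomial (Fin n) ℝ), G ≠ 0 → G.totalDegree ≤ g →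
      ∀ (p : Fin n → ℕ → ℝ), (∀ j, StrictMono (p j)) → ∀ (N : Fin n → ℕ) (T : ℕ),
      (∀ i, ∏ j ∈ Finset.univ.erase i, (N j + 1) ≤ T) → ∀ (B : Finset (Fin n → ℕ)),
      (∀ v ∈ B, ∀ i, v i < N i) →
      (∀ v ∈ B, ∃ x, (∀ i, p i (v i) ≤ x i ∧ x i ≤ p i (v i + 1)) ∧ MvPolynomial.eval x G = 0) →
      B.card ≤ pcK n g * T := by
  classical
  induction n with
  | zero =>
    intro g G hG _ p hp N T hT B hB hz
    have : B = ∅ := by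
      rw [Finset.eq_empty_iff_forall_notMem]
      intro v hv
      obtain ⟨x, _, hx⟩ := hz v hv
      apply hG
      apply MvPolynomial.funext
      intro y
      rw [Subsingleton.elim y x, hx, map_zero]
    simp [this]
  | succ n ih =>
    intro g G hG hdeg p hp N T hT B hB hz
    set Bf : Fin (n + 1) → ℕ → Finset (Fin (n + 1) → ℕ) := fun i l => B.filter fun v =>
      (v i = l ∨ v i + 1 = l) ∧ ∃ x, (∀ i, p i (v i) ≤ x i ∧ x i ≤ p i (v i + 1)) ∧ x i = p i l ∧
        MvPolynomial.eval x G = 0 with hBf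
    set B0 := B.filter fun v => ∀ x, (∀ i, p i (v i) ≤ x i ∧ x i ≤ p i (v i + 1)) →
      (∃ i, x i = p i (v i) ∨ x i = p i (v i + 1)) → MvPolynomial.eval x G ≠ 0 with hB0
    have hT1 : 1 ≤ T := le_trans (Finset.one_le_prod' fun j _ => by omega) (hT 0)
    have hcov : B ⊆ B0 ∪ Finset.univ.biUnion fun i =>
        (Finset.range (N i + 1)).biUnion fun l => Bf i l := by
      intro v hv
      rw [Finset.mem_union]
      by_cases h : v ∈ B0
      · exact Or.inl h
      right
      simp only [hB0, Finset.mem_filter, hv, true_and] at h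
      push Not at h
      obtain ⟨x, hx, ⟨i, hi⟩, hxG⟩ := h
      simp only [Finset.mem_biUnion, Finset.mem_univ, true_and, Finset.mem_range, hBf,
        Finset.mem_filter]
      have := hB v hv i
      rcases hi with hi | hi
      · exact ⟨i, v i, by omega, hv, Or.inl rfl, x, hx, hi, hxG⟩
      · exact ⟨i, v i + 1, by omega, hv, Or.inr rfl, x, hx, hi, hxG⟩
    have hB0c : B0.card ≤ (((n + 2) * (2 * g + 1) + 1) ^ (n + 1)) ^ (n + 1) := by
      apply pc_interior G hdeg B0 (fun v i => p i (v i)) (fun v i => p i (v i + 1))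
      · intro v _ w _ hvw
        obtain ⟨i, hi⟩ := Function.ne_iff.1 hvw
        refine ⟨i, ?_⟩
        rcases lt_or_gt_of_ne hi with h | h
        · exact Or.inl ((hp i).monotone (by omega))
        · exact Or.inr ((hp i).monotone (by omega))
      · intro v hv
        exact hz v (Finset.mem_filter.1 hv).1
      · intro v hv
        exact (Finset.mem_filter.1 hv).2
    have hside : ∀ i l, (pcRes i (p i l) G ≠ 0 → (Bf i l).card ≤ 2 * (pcK n g * (T / (N i + 1)))) ∧
        (Bf i l).card ≤ 2 * T := by
      intro i l
      have hcov2 : Bf i l ⊆ (Bf i l).filter (fun v => v i = l) ∪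
          (Bf i l).filter (fun v => v i = l - 1) := by
        intro v hv
        rw [Finset.mem_union]
        rcases (Finset.mem_filter.1 hv).2.1 with h | h
        · exact Or.inl (Finset.mem_filter.2 ⟨hv, h⟩)
        · exact Or.inr (Finset.mem_filter.2 ⟨hv, by omega⟩)
      have hle := (Finset.card_le_card hcov2).trans (Finset.card_union_le _ _)
      have key : ∀ c, (pcRes i (p i l) G ≠ 0 → ((Bf i l).filter fun v => v i = c).card ≤
          pcK n g * (T / (N i + 1))) ∧ ((Bf i l).filter fun v => v i = c).card ≤ T := by
        intro c
        refine pc_face (fun G h1 h2 => ih g G h1 h2) G hdeg p hp N T hT i (p i l) c _ ?_ ?_ ?_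
        · intro v hv
          exact hB v (Finset.mem_filter.1 (Finset.mem_filter.1 hv).1).1
        · intro v hv
          exact (Finset.mem_filter.1 hv).2
        · intro v hv
          exact (Finset.mem_filter.1 (Finset.mem_filter.1 hv).1).2.2
      refine ⟨fun h => ?_, ?_⟩
      · have := (key l).1 h
        have := (key (l - 1)).1 h
        omega
      · have := (key l).2
        have := (key (l - 1)).2
        omega
    have hi : ∀ i, ((Finset.range (N i + 1)).biUnion fun l => Bf i l).card ≤
        (2 * g + 2 * pcK n g) * T := by
      intro i
      refine Finset.card_biUnion_le.trans ?_
      rw [← Finset.sum_filter_add_sum_filter_not _ (fun l => pcRes i (p i l) G = 0)]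
      have hZ : ((Finset.range (N i + 1)).filter fun l => pcRes i (p i l) G = 0).card ≤ g := by
        rw [← Finset.card_image_of_injOn ((hp i).injective.injOn)]
        apply pcRes_zero i G hG g hdeg
        intro t ht
        obtain ⟨l, hl, rfl⟩ := Finset.mem_image.1 ht
        exact (Finset.mem_filter.1 hl).2
      have h1 : ∑ l ∈ (Finset.range (N i + 1)).filter (fun l => pcRes i (p i l) G = 0),
          (Bf i l).card ≤ g * (2 * T) :=
        (Finset.sum_le_card_nsmul _ _ _ (fun l _ => (hside i l).2)).trans
          (by rw [smul_eq_mul]; exact Nat.mul_le_mul_right _ hZ)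
      have h2 : ∑ l ∈ (Finset.range (N i + 1)).filter (fun l => ¬ pcRes i (p i l) G = 0),
          (Bf i l).card ≤ (N i + 1) * (2 * (pcK n g * (T / (N i + 1)))) := by
        refine (Finset.sum_le_card_nsmul _ _ _
          (fun l hl => (hside i l).1 (Finset.mem_filter.1 hl).2)).trans ?_
        rw [smul_eq_mul]
        refine Nat.mul_le_mul_right _ ((Finset.card_filter_le _ _).trans ?_)
        simp
      have h3 : (N i + 1) * (T / (N i + 1)) ≤ T := Nat.mul_div_le _ _
      have h4 : (N i + 1) * (2 * (pcK n g * (T / (N i + 1)))) ≤ 2 * pcK n g * T := by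
        calc _ = 2 * pcK n g * ((N i + 1) * (T / (N i + 1))) := by ring
          _ ≤ _ := Nat.mul_le_mul_left _ h3
      calc _ ≤ g * (2 * T) + 2 * pcK n g * T := Nat.add_le_add h1 (h2.trans h4)
        _ = _ := by ring
    have hu := (Finset.card_le_card hcov).trans (Finset.card_union_le _ _)
    have hbu : (Finset.univ.biUnion fun i =>
        (Finset.range (N i + 1)).biUnion fun l => Bf i l).card ≤
          (n + 1) * ((2 * g + 2 * pcK n g) * T) := by
      refine Finset.card_biUnion_le.trans ?_
      refine (Finset.sum_le_card_nsmul _ _ _ (fun i _ => hi i)).trans ?_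
      simp
    simp only [pcK]
    have h5 : (((n + 2) * (2 * g + 1) + 1) ^ (n + 1)) ^ (n + 1) ≤
      (((n + 2) * (2 * g + 1) + 1) ^ (n + 1)) ^ (n + 1) * T := Nat.le_mul_of_pos_right _ hT1
    calc B.card ≤ _ + _ := hu
      _ ≤ (((n + 2) * (2 * g + 1) + 1) ^ (n + 1)) ^ (n + 1) * T +
          (n + 1) * ((2 * g + 2 * pcK n g) * T) := Nat.add_le_add (hB0c.trans h5) hbu
      _ = _ := by ring

theorem ym_rolle (r : ℕ) : ∀ (h : ℝ → ℝ), ContDiff ℝ (⊤ : ℕ∞) h → ∀ (u v C : ℝ),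
    (∃ z : Fin r → ℝ, StrictMono z ∧ ∀ i, z i ∈ Icc u v ∧ h (z i) = 0) →
    (∀ y ∈ Icc u v, |iteratedDeriv r h y| ≤ C) →
    ∀ y ∈ Icc u v, |h y| ≤ C * (v - u) ^ r := by
  induction r with
  | zero =>
    intro h _ u v C _ hC y hy
    simpa using hC y hy
  | succ r ih =>
    intro h hh u v C hz hC y hy
    obtain ⟨z, hz, hz0⟩ := hz
    have hd : Differentiable ℝ h := hh.differentiable (by simp)
    have hw : ∀ i : Fin r, ∃ w ∈ Ioo (z i.castSucc) (z i.succ), deriv h w = 0 := by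
      intro i
      exact exists_deriv_eq_zero (hz Fin.castSucc_lt_succ) hd.continuous.continuousOn
        (by rw [(hz0 _).2, (hz0 _).2])
    choose w hw hw0 using hw
    have hwm : StrictMono w := by
      intro i j hij
      have h1 : z i.succ ≤ z j.castSucc := hz.monotone (by
        rw [Fin.le_iff_val_le_val]; simpa using hij)
      linarith [(hw i).2, (hw j).1]
    have hb := ih (deriv h) (hh.deriv' ) u v C ⟨w, hwm, fun i =>
      ⟨⟨(hz0 _).1.1.trans (hw i).1.le, (hw i).2.le.trans (hz0 _).1.2⟩, hw0 i⟩⟩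
      (fun y hy => by rw [← iteratedDeriv_succ']; exact hC y hy)
    have hm := (convex_Icc u v).norm_image_sub_le_of_norm_deriv_le (f := h)
      (fun x _ => hd x) (fun x hx => by simpa using hb x hx) (hz0 0).1 hy
    rw [(hz0 0).2, sub_zero, Real.norm_eq_abs, Real.norm_eq_abs] at hm
    have hC0 : 0 ≤ C := (abs_nonneg _).trans (hC y hy)
    have huv : 0 ≤ v - u := by linarith [hy.1, hy.2]
    have h2 : |y - z 0| ≤ v - u := by
      rw [abs_le]; constructor <;> linarith [hy.1, hy.2, (hz0 0).1.1, (hz0 0).1.2]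
    calc |h y| ≤ C * (v - u) ^ r * |y - z 0| := hm
      _ ≤ C * (v - u) ^ r * (v - u) := mul_le_mul_of_nonneg_left h2 (by positivity)
      _ = _ := by ring

theorem ym_dichotomy (r : ℕ) (Z : Set ℝ) :
    (∃ z : Fin r → ℝ, StrictMono z ∧ ∀ i, z i ∈ Z) ∨
    ∃ F : Finset ℝ, (∀ x, x ∈ Z ↔ x ∈ F) ∧ F.card < r := by
  have key : ∀ F : Finset ℝ, ↑F ⊆ Z → F.card = r →
      ∃ z : Fin r → ℝ, StrictMono z ∧ ∀ i, z i ∈ Z := by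
    intro F hF hr
    exact ⟨F.orderEmbOfFin hr, (F.orderEmbOfFin hr).strictMono,
      fun i => hF (F.orderEmbOfFin_mem hr i)⟩
  by_cases hfin : Z.Finite
  · by_cases hc : hfin.toFinset.card < r
    · exact Or.inr ⟨hfin.toFinset, fun x => by simp, hc⟩
    · left
      push Not at hc
      obtain ⟨F, hF, hr⟩ := Finset.exists_subset_card_eq hc
      exact key F (fun x hx => hfin.mem_toFinset.1 (hF hx)) hr
  · left
    obtain ⟨F, hF, hr⟩ := Set.Infinite.exists_subset_card_eq hfin r
    exact key F hF hr

/-- good intervals -/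
theorem ym_good (f : ℝ → ℝ) (hf : ContDiff ℝ (⊤ : ℕ∞) f) (a b : ℝ)
    (hmaps : MapsTo f (Icc a b) (Icc a b)) (g : ℝ → ℝ≥0∞) (K α : ℝ) (hα : 0 ≤ α) (hK : 0 ≤ K)
    (hg : ∀ u v, a ≤ u → u ≤ v → v ≤ b → ∫⁻ y in Icc u v, g y ≤ ENNReal.ofReal (K * (v - u) ^ α))
    (S l : ℝ) (hS : 0 ≤ S) (q : ℕ) :
    ∀ u v, a ≤ u → u ≤ v → v ≤ b → v - u ≤ l → (∀ y ∈ Icc u v, |deriv f y| ≤ S) →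
    ∀ F : Finset ℝ, (∀ x ∈ Ioo u v, deriv f x = 0 → x ∈ F) → F.card ≤ q →
    ∫⁻ y in Icc u v, ENNReal.ofReal |deriv f y| * g (f y) ≤
      (q + 1) * ENNReal.ofReal (K * (S * l) ^ α) := by
  classical
  have hd : Differentiable ℝ f := hf.differentiable (by simp)
  induction q using Nat.strong_induction_on with
  | _ q ih =>
  intro u v hau huv hvb hl hSb F hF hq
  by_cases hz : ∃ z ∈ Ioo u v, deriv f z = 0
  · obtain ⟨z, hz, hz0⟩ := hz
    set F1 := F.filter (· < z) with hF1
    set F2 := F.filter (z < ·) with hF2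
    have hcard : F1.card + F2.card + 1 ≤ F.card := by
      have h1 : Disjoint F1 F2 := by
        rw [Finset.disjoint_filter]; intro x _ h1 h2; linarith
      have h2 : z ∉ F1 ∪ F2 := by simp [hF1, hF2]
      rw [← Finset.card_union_of_disjoint h1, ← Finset.card_insert_of_notMem h2]
      apply Finset.card_le_card
      intro x hx
      rcases Finset.mem_insert.1 hx with h | h
      · rw [h]; exact hF z hz hz0
      · rcases Finset.mem_union.1 h with h | h <;> exact (Finset.mem_filter.1 h).1
    have e1 := ih F1.card (by omega) u z hau hz.1.le (hz.2.le.trans hvb) (by linarith [hz.2])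
      (fun y hy => hSb y ⟨hy.1, hy.2.trans hz.2.le⟩) F1
      (fun x hx h0 => Finset.mem_filter.2 ⟨hF x ⟨hx.1, hx.2.trans hz.2⟩ h0, hx.2⟩) le_rfl
    have e2 := ih F2.card (by omega) z v (hau.trans hz.1.le) hz.2.le hvb (by linarith [hz.1])
      (fun y hy => hSb y ⟨hz.1.le.trans hy.1, hy.2⟩) F2
      (fun x hx h0 => Finset.mem_filter.2 ⟨hF x ⟨hz.1.trans hx.1, hx.2⟩ h0, hx.1⟩) le_rfl
    rw [← Icc_union_Icc_eq_Icc hz.1.le hz.2.le]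
    refine (lintegral_union_le _ _ _).trans ((add_le_add e1 e2).trans ?_)
    rw [← add_mul]
    refine mul_le_mul' ?_ le_rfl
    have : F1.card + 1 + (F2.card + 1) ≤ q + 1 := by omega
    exact_mod_cast this
  · push Not at hz
    have hinj : InjOn f (Icc u v) := by
      have key : ∀ x ∈ Icc u v, ∀ y ∈ Icc u v, x < y → f x ≠ f y := by
        intro x hx y hy hxy h
        obtain ⟨c, hc, hc0⟩ := exists_deriv_eq_zero hxy hd.continuous.continuousOn h
        exact hz c ⟨hx.1.trans_lt hc.1, hc.2.trans_le hy.2⟩ hc0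
      intro x hx y hy h
      rcases lt_trichotomy x y with h1 | h1 | h1
      · exact (key x hx y hy h1 h).elim
      · exact h1
      · exact (key y hy x hx h1 h.symm).elim
    have hcv := lintegral_image_eq_lintegral_abs_deriv_mul (f := f) (f' := deriv f)
      (measurableSet_Icc (a := u) (b := v)) (fun x _ => (hd x).hasDerivAt.hasDerivWithinAt) hinj g
    rw [← hcv]
    have hne : (Icc u v).Nonempty := ⟨u, le_rfl, huv⟩
    obtain ⟨x1, hx1, hmin⟩ := isCompact_Icc.exists_isMinOn hne hd.continuous.continuousOn
    obtain ⟨x2, hx2, hmax⟩ := isCompact_Icc.exists_isMaxOn hne hd.continuous.continuousOn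
    have hsub : f '' Icc u v ⊆ Icc (f x1) (f x2) := by
      rintro _ ⟨x, hx, rfl⟩
      exact ⟨hmin hx, hmax hx⟩
    have hle12 : f x1 ≤ f x2 := hmin hx2
    have h1 := hmaps (x := x1) ⟨hau.trans hx1.1, hx1.2.trans hvb⟩
    have h2 := hmaps (x := x2) ⟨hau.trans hx2.1, hx2.2.trans hvb⟩
    have hlen : f x2 - f x1 ≤ S * l := by
      have hm := (convex_Icc u v).norm_image_sub_le_of_norm_deriv_le (f := f)
        (fun x _ => hd x) (fun x hx => by simpa using hSb x hx) hx1 hx2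
      rw [Real.norm_eq_abs, Real.norm_eq_abs] at hm
      have h3 : |x2 - x1| ≤ l := by
        rw [abs_le]; constructor <;> linarith [hx1.1, hx1.2, hx2.1, hx2.2]
      calc f x2 - f x1 ≤ |f x2 - f x1| := le_abs_self _
        _ ≤ S * |x2 - x1| := hm
        _ ≤ S * l := mul_le_mul_of_nonneg_left h3 hS
    calc ∫⁻ x in f '' Icc u v, g x ≤ ∫⁻ x in Icc (f x1) (f x2), g x :=
          lintegral_mono_set hsub
      _ ≤ ENNReal.ofReal (K * (f x2 - f x1) ^ α) := hg _ _ h1.1 hle12 h2.2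
      _ ≤ ENNReal.ofReal (K * (S * l) ^ α) := by
          apply ENNReal.ofReal_le_ofReal
          apply mul_le_mul_of_nonneg_left _ hK
          exact Real.rpow_le_rpow (by linarith) hlen hα
      _ ≤ (q + 1) * ENNReal.ofReal (K * (S * l) ^ α) := by
          conv_lhs => rw [← one_mul (ENNReal.ofReal _)]
          gcongr
          exact le_add_self

def ymBad (f : ℝ → ℝ) (r : ℕ) (u v : ℝ) : Prop :=
  ∃ z : Fin r → ℝ, StrictMono z ∧ ∀ i, z i ∈ Icc u v ∧ deriv f (z i) = 0

theorem ym_bad (f : ℝ → ℝ) (hf : ContDiff ℝ (⊤ : ℕ∞) f) (a b : ℝ)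
    (hmaps : MapsTo f (Icc a b) (Icc a b)) (g : ℝ → ℝ≥0∞) (K : ℝ) (r : ℕ) (hr : 1 ≤ r)
    (α : ℝ) (hα : α = 2 / (r + 1)) (hK : 0 ≤ K)
    (hg : ∀ u v, a ≤ u → u ≤ v → v ≤ b → ∫⁻ y in Icc u v, g y ≤ ENNReal.ofReal (K * (v - u) ^ α))
    (M : ℝ) (hM : 0 ≤ M) (hgM : ∀ y ∈ Icc a b, g y ≤ ENNReal.ofReal M)
    (C : ℝ) (hC : 0 ≤ C) (hfC : ∀ y ∈ Icc a b, |iteratedDeriv (r + 1) f y| ≤ C) (d : ℕ) :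
    ∀ u v, a ≤ u → u ≤ v → v ≤ b → v - u ≤ 1 → ymBad f r u v →
    ∫⁻ y in Icc u v, ENNReal.ofReal |deriv f y| * g (f y) ≤
      ENNReal.ofReal ((4 * r * K * C ^ α + C * M / 2 ^ d) * (v - u) ^ 2) := by
  have hbound : ∀ u v, a ≤ u → v ≤ b → ymBad f r u v → ∀ y ∈ Icc u v,
      |deriv f y| ≤ C * (v - u) ^ r := by
    intro u v hau hvb hbad
    refine ym_rolle r (deriv f) hf.deriv' u v C hbad fun y hy => ?_
    rw [← iteratedDeriv_succ']
    exact hfC y ⟨hau.trans hy.1, hy.2.trans hvb⟩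
  have hα0 : 0 ≤ α := by rw [hα]; positivity
  have hCα : 0 ≤ C ^ α := Real.rpow_nonneg hC _
  induction d with
  | zero =>
    intro u v hau huv hvb hl hbad
    have h1 : ∫⁻ y in Icc u v, ENNReal.ofReal |deriv f y| * g (f y) ≤
        ∫⁻ _ in Icc u v, ENNReal.ofReal (C * (v - u) ^ r * M) := by
      refine setLIntegral_mono' measurableSet_Icc fun y hy => ?_
      have huv0 : 0 ≤ v - u := by linarith
      rw [ENNReal.ofReal_mul (by positivity)]
      gcongr
      · exact hbound u v hau hvb hbad y hy
      · exact hgM _ (hmaps ⟨hau.trans hy.1, hy.2.trans hvb⟩)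
    refine h1.trans ?_
    rw [setLIntegral_const, Real.volume_Icc, ← ENNReal.ofReal_mul
      (by have : 0 ≤ v - u := by linarith
          positivity)]
    apply ENNReal.ofReal_le_ofReal
    have huv0 : 0 ≤ v - u := by linarith
    have h2 : (v - u) ^ r ≤ v - u := pow_le_of_le_one huv0 hl (by omega)
    have h3 : C * (v - u) ^ r * M * (v - u) ≤ C * M * (v - u) ^ 2 := by
      calc C * (v - u) ^ r * M * (v - u) ≤ C * (v - u) * M * (v - u) := by gcongr
        _ = _ := by ring
    have h4 : 0 ≤ 4 * r * K * C ^ α * (v - u) ^ 2 := by positivity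
    simp only [pow_zero, div_one]
    nlinarith
  | succ d ih =>
    intro u v hau huv hvb hl hbad
    set l := v - u with hldef
    have hl0 : 0 ≤ l := by linarith
    have hhalf : ∀ u' v', u ≤ u' → u' ≤ v' → v' ≤ v → v' - u' = l / 2 →
        ∫⁻ y in Icc u' v', ENNReal.ofReal |deriv f y| * g (f y) ≤
        ENNReal.ofReal ((4 * r * K * C ^ α + C * M / 2 ^ d) * (l / 2) ^ 2 +
          r * K * C ^ α * l ^ 2) := by
      intro u' v' h1 h2 h3 h4
      rcases ym_dichotomy r {x | x ∈ Icc u' v' ∧ deriv f x = 0} with hb | ⟨F, hF, hFc⟩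
      · refine (ih u' v' (hau.trans h1) h2 (h3.trans hvb) (by linarith) hb).trans ?_
        apply ENNReal.ofReal_le_ofReal
        rw [h4]
        have : 0 ≤ r * K * C ^ α * l ^ 2 := by positivity
        linarith
      · have hgood := ym_good f hf a b hmaps g K α hα0 hK hg (C * l ^ r) l (by positivity) (r - 1)
          u' v' (hau.trans h1) h2 (h3.trans hvb) (by linarith)
          (fun y hy => hbound u v hau hvb hbad y ⟨h1.trans hy.1, hy.2.trans h3⟩) F
          (fun x hx h0 => (hF x).1 ⟨Ioo_subset_Icc_self hx, h0⟩) (by omega)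
        refine hgood.trans ?_
        have e1 : (((r - 1 : ℕ) : ℝ≥0∞) + 1) = ENNReal.ofReal r := by
          rw [ENNReal.ofReal_natCast]
          have : r = (r - 1) + 1 := by omega
          conv_rhs => rw [this]
          push_cast; rfl
        rw [e1, ← ENNReal.ofReal_mul (by positivity)]
        apply ENNReal.ofReal_le_ofReal
        have e2 : (C * l ^ r * l) ^ α = C ^ α * l ^ 2 := by
          rw [mul_assoc, ← pow_succ, Real.mul_rpow hC (by positivity), ← Real.rpow_natCast,
            ← Real.rpow_mul hl0, hα]
          congr 1
          rw [← Real.rpow_natCast]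
          congr 1
          push_cast
          field_simp
        rw [e2]
        have : 0 ≤ (4 * r * K * C ^ α + C * M / 2 ^ d) * (l / 2) ^ 2 := by positivity
        nlinarith
    have hmid1 : u ≤ (u + v) / 2 := by linarith
    have hmid2 : (u + v) / 2 ≤ v := by linarith
    rw [← Icc_union_Icc_eq_Icc hmid1 hmid2]
    refine (lintegral_union_le _ _ _).trans ((add_le_add
      (hhalf _ _ le_rfl hmid1 hmid2 (by rw [hldef]; ring))
      (hhalf _ _ hmid1 hmid2 le_rfl (by rw [hldef]; ring))).trans ?_)
    rw [← ENNReal.ofReal_add (by positivity) (by positivity)]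
    apply ENNReal.ofReal_le_ofReal
    apply le_of_eq
    rw [pow_succ]
    field_simp
    ring

theorem ym_step (f : ℝ → ℝ) (hf : ContDiff ℝ (⊤ : ℕ∞) f) (a b : ℝ)
    (hmaps : MapsTo f (Icc a b) (Icc a b)) (r : ℕ) (hr : 1 ≤ r)
    (α : ℝ) (hα : α = 2 / (r + 1))
    (C : ℝ) (hC : 0 ≤ C) (hfC : ∀ y ∈ Icc a b, |iteratedDeriv (r + 1) f y| ≤ C)
    (hfC2 : ∀ y ∈ Icc a b, |iteratedDeriv 2 f y| ≤ C) (L : ℝ) (hL : 1 ≤ L)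
    (hfL : ∀ y ∈ Icc a b, |deriv f y| ≤ L)
    (l0 : ℝ) (hl1 : l0 ≤ 1) (hs1 : 4 * r * C ^ α * l0 ≤ 1) (hs2 : r * C ^ α * l0 ^ α ≤ 1)
    (g : ℝ → ℝ≥0∞) (K : ℝ) (hK : 0 ≤ K)
    (hg : ∀ u v, a ≤ u → u ≤ v → v ≤ b → ∫⁻ y in Icc u v, g y ≤ ENNReal.ofReal (K * (v - u) ^ α))
    (M : ℝ) (hM : 0 ≤ M) (hgM : ∀ y ∈ Icc a b, g y ≤ ENNReal.ofReal M)
    (u v : ℝ) (hau : a ≤ u) (huv : u ≤ v) (hvb : v ≤ b) (hl : v - u ≤ l0) :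
    ∫⁻ y in Icc u v, ENNReal.ofReal |deriv f y| * g (f y) ≤
      ENNReal.ofReal (K * L ^ α * (v - u) ^ α) := by
  have hα0 : 0 < α := by rw [hα]; positivity
  have hr1 : (1 : ℝ) ≤ r := by exact_mod_cast hr
  have hα1 : α ≤ 1 := by rw [hα, div_le_one (by positivity)]; linarith
  have hCα : 0 ≤ C ^ α := Real.rpow_nonneg hC _
  have hLα : 1 ≤ L ^ α := Real.one_le_rpow hL hα0.le
  set l := v - u with hldef
  have hl0 : 0 ≤ l := by linarith
  have hlα : 0 ≤ l ^ α := Real.rpow_nonneg hl0 _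
  have hgoal : K * l ^ α ≤ K * L ^ α * l ^ α := by
    have : 0 ≤ K * l ^ α := by positivity
    nlinarith
  rcases ym_dichotomy r {x | x ∈ Icc u v ∧ deriv f x = 0} with hb | ⟨F, hF, hFc⟩
  · have hlim : ∫⁻ y in Icc u v, ENNReal.ofReal |deriv f y| * g (f y) ≤
        ENNReal.ofReal ((4 * r * K * C ^ α + 0) * l ^ 2) := by
      have ht : Tendsto (fun d : ℕ => ENNReal.ofReal
          ((4 * r * K * C ^ α + C * M / 2 ^ d) * l ^ 2)) atTop
          (𝓝 (ENNReal.ofReal ((4 * r * K * C ^ α + 0) * l ^ 2))) := by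
        apply ENNReal.tendsto_ofReal
        apply Tendsto.mul_const
        apply Tendsto.const_add
        apply Tendsto.div_atTop tendsto_const_nhds
        exact tendsto_pow_atTop_atTop_of_one_lt (by norm_num)
      exact ge_of_tendsto' ht fun d => ym_bad f hf a b hmaps g K r hr α hα hK hg M hM hgM C hC hfC
        d u v hau huv hvb (by linarith) hb
    refine hlim.trans (ENNReal.ofReal_le_ofReal (le_trans ?_ hgoal))
    have h1 : l ≤ l ^ α := by
      conv_lhs => rw [← Real.rpow_one l]
      exact Real.rpow_le_rpow_of_exponent_ge' hl0 (hl.trans hl1) hα0.le hα1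
    have h2 : 4 * r * C ^ α * l ≤ 1 := le_trans (by gcongr) hs1
    calc (4 * r * K * C ^ α + 0) * l ^ 2 = K * l * (4 * r * C ^ α * l) := by ring
      _ ≤ K * l * 1 := by gcongr
      _ ≤ K * l ^ α := by rw [mul_one]; gcongr
  · have e1 : (((r - 1 : ℕ) : ℝ≥0∞) + 1) = ENNReal.ofReal r := by
      rw [ENNReal.ofReal_natCast]
      have : r = (r - 1) + 1 := by omega
      conv_rhs => rw [this]
      push_cast; rfl
    by_cases hz : ∃ z ∈ Icc u v, deriv f z = 0
    · obtain ⟨z, hz, hz0⟩ := hz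
      have hS : ∀ y ∈ Icc u v, |deriv f y| ≤ C * l := by
        have := ym_rolle 1 (deriv f) hf.deriv' u v C
          ⟨fun _ => z, Subsingleton.strictMono _, fun _ => ⟨hz, hz0⟩⟩ (fun y hy => by
            rw [← iteratedDeriv_succ']; exact hfC2 y ⟨hau.trans hy.1, hy.2.trans hvb⟩)
        simpa using this
      have hgood := ym_good f hf a b hmaps g K α hα0.le hK hg (C * l) l (by positivity) (r - 1)
          u v hau huv hvb le_rfl hS F
          (fun x hx h0 => (hF x).1 ⟨Ioo_subset_Icc_self hx, h0⟩) (by omega)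
      refine hgood.trans ?_
      rw [e1, ← ENNReal.ofReal_mul (by positivity)]
      refine ENNReal.ofReal_le_ofReal (le_trans ?_ hgoal)
      rw [Real.mul_rpow (by positivity) hl0, Real.mul_rpow hC hl0]
      have h3 : l ^ α ≤ l0 ^ α := Real.rpow_le_rpow hl0 hl hα0.le
      calc (r : ℝ) * (K * (C ^ α * l ^ α * l ^ α)) = K * l ^ α * (r * C ^ α * l ^ α) := by ring
        _ ≤ K * l ^ α * 1 := by
            gcongr
            exact le_trans (by gcongr) hs2
        _ = K * l ^ α := mul_one _
    · push Not at hz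
      have hgood := ym_good f hf a b hmaps g K α hα0.le hK hg L l (by positivity) 0
          u v hau huv hvb le_rfl (fun y hy => hfL y ⟨hau.trans hy.1, hy.2.trans hvb⟩) ∅
          (fun x hx h0 => (hz x (Ioo_subset_Icc_self hx) h0).elim) (by simp)
      refine hgood.trans ?_
      simp only [Nat.cast_zero, zero_add, one_mul]
      rw [Real.mul_rpow (by linarith) hl0, mul_assoc]

def ymG (f : ℝ → ℝ) (ε : ℝ) : ℕ → (ℕ → ℝ) → ℝ → ℝ≥0∞
  | 0, c => (Icc (c 0 - ε) (c 0 + ε)).indicator fun _ => 1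
  | m + 1, c => (Icc (c 0 - ε) (c 0 + ε)).indicator fun y =>
      ENNReal.ofReal |deriv f y| * ymG f ε m (fun s => c (s + 1)) (f y)

def ymD (f : ℝ → ℝ) (m : ℕ) (y : ℝ) : ℝ := ∏ s ∈ Finset.range m, |deriv f (f^[s] y)|

theorem ymD_succ (f : ℝ → ℝ) (m : ℕ) (y : ℝ) : ymD f (m + 1) y = |deriv f y| * ymD f m (f y) := by
  unfold ymD
  rw [Finset.prod_range_succ', mul_comm]
  simp [Function.iterate_succ_apply]

theorem ymD_nonneg (f : ℝ → ℝ) (m : ℕ) (y : ℝ) : 0 ≤ ymD f m y :=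
  Finset.prod_nonneg fun _ _ => abs_nonneg _

theorem ymG_eq (f : ℝ → ℝ) (ε : ℝ) (m : ℕ) : ∀ (c : ℕ → ℝ) (y : ℝ),
    (∀ s < m + 1, |f^[s] y - c s| ≤ ε) → ymG f ε m c y = ENNReal.ofReal (ymD f m y) := by
  have hmem : ∀ (c : ℕ → ℝ) (y : ℝ), |y - c 0| ≤ ε → y ∈ Icc (c 0 - ε) (c 0 + ε) := by
    intro c y h
    rw [abs_le] at h
    constructor <;> linarith
  induction m with
  | zero =>
    intro c y h
    have := hmem c y (by simpa using h 0 (by omega))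
    simp only [ymG]
    rw [indicator_of_mem this]
    simp [ymD]
  | succ m ih =>
    intro c y h
    have := hmem c y (by simpa using h 0 (by omega))
    simp only [ymG]
    rw [indicator_of_mem this, ymD_succ, ENNReal.ofReal_mul (abs_nonneg _), ih]
    intro s hs
    rw [← Function.iterate_succ_apply]
    exact h (s + 1) (by omega)

theorem ymG_measurable (f : ℝ → ℝ) (hf : ContDiff ℝ (⊤ : ℕ∞) f) (ε : ℝ) (m : ℕ) :
    ∀ (c : ℕ → ℝ), Measurable (ymG f ε m c) := by
  have hd : Continuous (deriv f) := hf.continuous_deriv (by simp)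
  induction m with
  | zero => intro c; exact measurable_const.indicator measurableSet_Icc
  | succ m ih =>
    intro c
    refine Measurable.indicator ?_ measurableSet_Icc
    exact (hd.abs.measurable.ennreal_ofReal).mul ((ih _).comp hf.continuous.measurable)

theorem ymG_le (f : ℝ → ℝ) (a b : ℝ) (hmaps : MapsTo f (Icc a b) (Icc a b)) (ε L : ℝ)
    (hL : 0 ≤ L) (hfL : ∀ y ∈ Icc a b, |deriv f y| ≤ L) (m : ℕ) :
    ∀ (c : ℕ → ℝ), ∀ y ∈ Icc a b, ymG f ε m c y ≤ ENNReal.ofReal (L ^ m) := by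
  induction m with
  | zero =>
    intro c y _
    simp only [ymG]
    refine (indicator_le_self' (fun _ _ => zero_le) y).trans ?_
    simp
  | succ m ih =>
    intro c y hy
    simp only [ymG]
    refine (indicator_le_self' (fun _ _ => zero_le) y).trans ?_
    rw [pow_succ', ENNReal.ofReal_mul hL]
    exact mul_le_mul' (ENNReal.ofReal_le_ofReal (hfL y hy)) (ih _ _ (hmaps hy))

theorem ymG_int (f : ℝ → ℝ) (hf : ContDiff ℝ (⊤ : ℕ∞) f) (a b : ℝ)
    (hmaps : MapsTo f (Icc a b) (Icc a b)) (r : ℕ) (hr : 1 ≤ r)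
    (α : ℝ) (hα : α = 2 / (r + 1))
    (C : ℝ) (hC : 0 ≤ C) (hfC : ∀ y ∈ Icc a b, |iteratedDeriv (r + 1) f y| ≤ C)
    (hfC2 : ∀ y ∈ Icc a b, |iteratedDeriv 2 f y| ≤ C) (L : ℝ) (hL : 1 ≤ L)
    (hfL : ∀ y ∈ Icc a b, |deriv f y| ≤ L)
    (ε : ℝ) (hl1 : 2 * ε ≤ 1) (hs1 : 4 * r * C ^ α * (2 * ε) ≤ 1)
    (hs2 : r * C ^ α * (2 * ε) ^ α ≤ 1) (m : ℕ) : ∀ (c : ℕ → ℝ) (u v : ℝ),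
    a ≤ u → u ≤ v → v ≤ b → ∫⁻ y in Icc u v, ymG f ε m c y ≤
      ENNReal.ofReal ((L ^ α) ^ m * (v - u) ^ α) := by
  have hα0 : 0 < α := by rw [hα]; positivity
  have hr1 : (1 : ℝ) ≤ r := by exact_mod_cast hr
  have hα1 : α ≤ 1 := by rw [hα, div_le_one (by positivity)]; linarith
  have hLα : 0 ≤ L ^ α := Real.rpow_nonneg (by linarith) _
  induction m with
  | zero =>
    intro c u v hau huv hvb
    simp only [ymG]
    rw [setLIntegral_indicator measurableSet_Icc, Icc_inter_Icc, setLIntegral_one, Real.volume_Icc]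
    apply ENNReal.ofReal_le_ofReal
    simp only [pow_zero, one_mul]
    set l := min (c 0 + ε) v - max (c 0 - ε) u with hl
    have hlv : l ≤ v - u := by
      have := min_le_right (c 0 + ε) v
      have := le_max_right (c 0 - ε) u
      linarith
    have hl2 : l ≤ 1 := by
      have := min_le_left (c 0 + ε) v
      have := le_max_left (c 0 - ε) u
      linarith
    by_cases hl0 : 0 ≤ l
    · calc l = l ^ (1 : ℝ) := (Real.rpow_one l).symm
        _ ≤ l ^ α := Real.rpow_le_rpow_of_exponent_ge' hl0 hl2 hα0.le hα1
        _ ≤ _ := Real.rpow_le_rpow hl0 hlv hα0.le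
    · have : 0 ≤ (v - u) ^ α := Real.rpow_nonneg (by linarith) _
      linarith
  | succ m ih =>
    intro c u v hau huv hvb
    simp only [ymG]
    rw [setLIntegral_indicator measurableSet_Icc, Icc_inter_Icc]
    set u' := max (c 0 - ε) u with hu'
    set v' := min (c 0 + ε) v with hv'
    have h1 := min_le_right (c 0 + ε) v
    have h2 := le_max_right (c 0 - ε) u
    have h3 := min_le_left (c 0 + ε) v
    have h4 := le_max_left (c 0 - ε) u
    by_cases huv' : u' ≤ v'
    · refine (ym_step f hf a b hmaps r hr α hα C hC hfC hfC2 L hL hfL (2 * ε) hl1 hs1 hs2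
        (ymG f ε m fun s => c (s + 1)) ((L ^ α) ^ m) (by positivity) (ih _) (L ^ m) (by positivity)
        (ymG_le f a b hmaps ε L (by linarith) hfL m _) u' v' (hau.trans h2) huv' (h1.trans hvb)
        (by linarith)).trans ?_
      apply ENNReal.ofReal_le_ofReal
      rw [pow_succ]
      apply mul_le_mul_of_nonneg_left _ (by positivity)
      exact Real.rpow_le_rpow (by linarith) (by linarith) hα0.le
    · rw [show Icc ((c 0 - ε) ⊔ u) ((c 0 + ε) ⊓ v) = ∅ from Icc_eq_empty huv']
      simp

theorem ymD_continuous (f : ℝ → ℝ) (hf : ContDiff ℝ (⊤ : ℕ∞) f) (m : ℕ) :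
    Continuous (ymD f m) := by
  have hd : Continuous (deriv f) := hf.continuous_deriv (by simp)
  unfold ymD
  exact continuous_finsetProd _ fun s _ => (hd.comp (hf.continuous.iterate s)).abs

theorem ymD_deriv (f : ℝ → ℝ) (hf : ContDiff ℝ (⊤ : ℕ∞) f) (m : ℕ) (y : ℝ) :
    ∃ d, HasDerivAt f^[m] d y ∧ |d| = ymD f m y := by
  have hd : Differentiable ℝ f := hf.differentiable (by simp)
  induction m with
  | zero => exact ⟨1, hasDerivAt_id y, by simp [ymD]⟩
  | succ m ih =>
    obtain ⟨d, h1, h2⟩ := ih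
    refine ⟨deriv f (f^[m] y) * d, ?_, ?_⟩
    · rw [Function.iterate_succ']
      exact (hd (f^[m] y)).hasDerivAt.comp y h1
    · rw [abs_mul, h2, ymD, ymD, Finset.prod_range_succ, mul_comm]

theorem ymD_total (f : ℝ → ℝ) (hf : ContDiff ℝ (⊤ : ℕ∞) f) (a b : ℝ) (hab : a ≤ b) (ε : ℝ)
    (m : ℕ) (K : ℝ) (hK : 0 ≤ K)
    (hG : ∀ c, ∫⁻ y in Icc a b, ymG f ε m c y ≤ ENNReal.ofReal K) (A : Finset ℝ)
    (hA : ∀ y ∈ Icc a b, ∃ c ∈ A, ∀ s < m + 1, |f^[s] y - f^[s] c| < ε) :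
    ∫ y in a..b, ymD f m y ≤ A.card * K := by
  rw [intervalIntegral.integral_of_le hab, ← integral_Icc_eq_integral_Ioc]
  have hIntg : IntegrableOn (ymD f m) (Icc a b) :=
    (ymD_continuous f hf m).continuousOn.integrableOn_Icc
  rw [← ENNReal.ofReal_le_ofReal_iff (by positivity),
    ofReal_integral_eq_lintegral_ofReal hIntg (Eventually.of_forall fun y => ymD_nonneg f m y)]
  calc ∫⁻ y in Icc a b, ENNReal.ofReal (ymD f m y)
      ≤ ∫⁻ y in Icc a b, ∑ c ∈ A, ymG f ε m (fun s => f^[s] c) y := by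
        refine setLIntegral_mono' measurableSet_Icc fun y hy => ?_
        obtain ⟨c, hc, hcy⟩ := hA y hy
        rw [← ymG_eq f ε m (fun s => f^[s] c) y (fun s hs => (hcy s hs).le)]
        exact Finset.single_le_sum (f := fun c => ymG f ε m (fun s => f^[s] c) y)
          (fun _ _ => zero_le) hc
    _ = ∑ c ∈ A, ∫⁻ y in Icc a b, ymG f ε m (fun s => f^[s] c) y :=
        lintegral_finsetSum _ fun c _ => ymG_measurable f hf ε m _
    _ ≤ ∑ _c ∈ A, ENNReal.ofReal K := Finset.sum_le_sum fun c _ => hG _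
    _ = ENNReal.ofReal (A.card * K) := by
        rw [Finset.sum_const, nsmul_eq_mul, ENNReal.ofReal_mul (by positivity),
          ENNReal.ofReal_natCast]

theorem ym_growth (f : ℝ → ℝ) (hf : ContDiff ℝ (⊤ : ℕ∞) f) (a b : ℝ) (hab : a < b)
    (hmaps : MapsTo f (Icc a b) (Icc a b)) (h : ℝ) (hh : 0 ≤ h)
    (hcov : ∀ ε > 0, ∀ δ > 0, ∃ m0 : ℕ, ∀ m ≥ m0, ∃ A : Finset ℝ,
      (∀ y ∈ Icc a b, ∃ c ∈ A, ∀ s < m, |f^[s] y - f^[s] c| < ε) ∧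
      (A.card : ℝ) ≤ Real.exp (m * (h + δ))) (δ : ℝ) (hδ : 0 < δ) :
    ∃ C0 : ℝ, 0 ≤ C0 ∧ ∀ m : ℕ, ∫ y in a..b, ymD f m y ≤ C0 * Real.exp (m * (h + 2 * δ)) := by
  have hbd : ∀ g : ℝ → ℝ, Continuous g → ∃ C : ℝ, ∀ y ∈ Icc a b, |g y| ≤ C := fun g hg =>
    isCompact_Icc.exists_bound_of_continuousOn hg.continuousOn
  obtain ⟨L0, hL0⟩ := hbd (deriv f) (hf.continuous_deriv (by simp))
  set L := max L0 1 with hLdef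
  have hL : 1 ≤ L := le_max_right _ _
  have hfL : ∀ y ∈ Icc a b, |deriv f y| ≤ L := fun y hy => (hL0 y hy).trans (le_max_left _ _)
  obtain ⟨r, hr1, hr⟩ : ∃ r : ℕ, 1 ≤ r ∧ 2 / ((r : ℝ) + 1) * Real.log L ≤ δ := by
    obtain ⟨r, hr⟩ := exists_nat_ge (2 * Real.log L / δ)
    refine ⟨r + 1, by omega, ?_⟩
    rw [div_mul_eq_mul_div, div_le_iff₀ (by positivity)]
    rw [div_le_iff₀ hδ] at hr
    push_cast
    nlinarith
  set α : ℝ := 2 / ((r : ℝ) + 1) with hα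
  have hα0 : 0 < α := by rw [hα]; positivity
  have hcid : ∀ k, Continuous (iteratedDeriv k f) := fun k =>
    hf.continuous_iteratedDeriv k (by exact_mod_cast le_top)
  obtain ⟨C1, hC1⟩ := hbd (iteratedDeriv (r + 1) f) (hf.continuous_iteratedDeriv _ (by
    exact_mod_cast le_top))
  obtain ⟨C2, hC2⟩ := hbd (iteratedDeriv 2 f) (hcid 2)
  set C := max 0 (max C1 C2) with hCdef
  have hC : 0 ≤ C := le_max_left _ _
  obtain ⟨ε, hε, hl1, hs1, hs2⟩ : ∃ ε > 0, 2 * ε ≤ 1 ∧ 4 * r * C ^ α * (2 * ε) ≤ 1 ∧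
      r * C ^ α * (2 * ε) ^ α ≤ 1 := by
    have t1 : Tendsto (fun ε : ℝ => 2 * ε) (𝓝[>] 0) (𝓝 0) := by
      have : Tendsto (fun ε : ℝ => 2 * ε) (𝓝 0) (𝓝 (2 * 0)) := tendsto_id.const_mul 2
      rw [mul_zero] at this
      exact this.mono_left nhdsWithin_le_nhds
    have t2 : Tendsto (fun ε : ℝ => 4 * r * C ^ α * (2 * ε)) (𝓝[>] 0) (𝓝 0) := by
      simpa using t1.const_mul (4 * r * C ^ α)
    have t3 : Tendsto (fun ε : ℝ => r * C ^ α * (2 * ε) ^ α) (𝓝[>] 0) (𝓝 0) := by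
      have := (t1.rpow_const (p := α) (Or.inr hα0.le)).const_mul (r * C ^ α)
      simpa [Real.zero_rpow hα0.ne'] using this
    have e := ((t1.eventually (Iic_mem_nhds one_pos)).and
      ((t2.eventually (Iic_mem_nhds one_pos)).and
      (t3.eventually (Iic_mem_nhds one_pos)))).and self_mem_nhdsWithin
    obtain ⟨ε, ⟨h1, h2, h3⟩, h4⟩ := e.exists
    exact ⟨ε, h4, h1, h2, h3⟩
  have hmain := ymG_int f hf a b hmaps r hr1 α hα C hC
    (fun y hy => (hC1 y hy).trans ((le_max_left _ _).trans (le_max_right _ _)))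
    (fun y hy => (hC2 y hy).trans ((le_max_right _ _).trans (le_max_right _ _))) L hL hfL ε hl1
    hs1 hs2
  obtain ⟨m0, hm0⟩ := hcov ε hε δ hδ
  have hnn : ∀ m, 0 ≤ ∫ y in a..b, ymD f m y := fun m =>
    intervalIntegral.integral_nonneg hab.le fun y _ => ymD_nonneg f m y
  have hba : 0 ≤ (b - a) ^ α := Real.rpow_nonneg (by linarith) _
  refine ⟨Real.exp (h + δ) * (b - a) ^ α + ∑ m ∈ Finset.range m0, ∫ y in a..b, ymD f m y,
    add_nonneg (by positivity) (Finset.sum_nonneg fun m _ => hnn m), fun m => ?_⟩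
  by_cases hm : m < m0
  · have h1 : 1 ≤ Real.exp (m * (h + 2 * δ)) := Real.one_le_exp (by positivity)
    have h2 : ∫ y in a..b, ymD f m y ≤ ∑ m ∈ Finset.range m0, ∫ y in a..b, ymD f m y :=
      Finset.single_le_sum (f := fun m => ∫ y in a..b, ymD f m y) (fun m _ => hnn m)
        (Finset.mem_range.2 hm)
    have h3 : 0 ≤ Real.exp (h + δ) * (b - a) ^ α := by positivity
    have h4 := hnn m
    nlinarith
  · obtain ⟨A, hA, hAc⟩ := hm0 (m + 1) (by omega)
    have hLα : (L ^ α) ^ m ≤ Real.exp (m * δ) := by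
      rw [mul_comm, Real.exp_mul, Real.rpow_natCast]
      apply pow_le_pow_left₀ (Real.rpow_nonneg (by linarith) _)
      rw [Real.rpow_def_of_pos (by linarith)]
      apply Real.exp_le_exp.2
      linarith
    have hK0 : 0 ≤ (L ^ α) ^ m * (b - a) ^ α :=
      mul_nonneg (pow_nonneg (Real.rpow_nonneg (by linarith) _) _) hba
    have h1 := ymD_total f hf a b hab.le ε m ((L ^ α) ^ m * (b - a) ^ α) hK0
      (fun c => hmain m c a b le_rfl hab.le le_rfl) A hA
    refine h1.trans ?_
    have h2 : (A.card : ℝ) * ((L ^ α) ^ m * (b - a) ^ α) ≤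
        Real.exp ((m + 1 : ℕ) * (h + δ)) * (Real.exp (m * δ) * (b - a) ^ α) := by gcongr
    refine h2.trans ?_
    have h3 : Real.exp ((m + 1 : ℕ) * (h + δ)) * (Real.exp (m * δ) * (b - a) ^ α) =
        Real.exp (h + δ) * (b - a) ^ α * Real.exp (m * (h + 2 * δ)) := by
      have : Real.exp ((m + 1 : ℕ) * (h + δ)) * Real.exp (m * δ) =
          Real.exp (h + δ) * Real.exp (m * (h + 2 * δ)) := by
        rw [← Real.exp_add, ← Real.exp_add]; congr 1; push_cast; ring
      calc _ = (Real.exp ((m + 1 : ℕ) * (h + δ)) * Real.exp (m * δ)) * (b - a) ^ α := by ring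
        _ = _ := by rw [this]; ring
    rw [h3, add_mul]
    have : 0 ≤ (∑ m ∈ Finset.range m0, ∫ y in a..b, ymD f m y) * Real.exp (m * (h + 2 * δ)) :=
      mul_nonneg (Finset.sum_nonneg fun m _ => hnn m) (Real.exp_pos _).le
    linarith

theorem ym_partition (f : ℝ → ℝ) (hf : ContDiff ℝ (⊤ : ℕ∞) f) (a b : ℝ) (hab : a < b)
    (hmaps : MapsTo f (Icc a b) (Icc a b)) (h : ℝ) (hh : 0 ≤ h)
    (hcov : ∀ ε > 0, ∀ δ > 0, ∃ m0 : ℕ, ∀ m ≥ m0, ∃ A : Finset ℝ,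
      (∀ y ∈ Icc a b, ∃ c ∈ A, ∀ s < m, |f^[s] y - f^[s] c| < ε) ∧
      (A.card : ℝ) ≤ Real.exp (m * (h + δ))) (ε1 : ℝ) (hε1 : 0 < ε1) (δ : ℝ) (hδ : 0 < δ) :
    ∃ C : ℝ, 0 ≤ C ∧ ∀ m : ℕ, ∃ (p : ℕ → ℝ) (N : ℕ), StrictMono p ∧
      (∀ y ∈ Icc a b, ∃ l < N, p l ≤ y ∧ y ≤ p (l + 1)) ∧
      (∀ l y y', p l ≤ y → y ≤ p (l + 1) → p l ≤ y' → y' ≤ p (l + 1) →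
        ∀ s < m, |f^[s] y - f^[s] y'| ≤ ε1) ∧
      ((N : ℝ) + 1) ≤ C * Real.exp (m * (h + δ)) := by
  obtain ⟨C0, hC0, hgr⟩ := ym_growth f hf a b hab hmaps h hh hcov (δ / 3) (by positivity)
  set B : ℝ := ((b - a) + C0 * (3 / δ)) / ε1 + 2 with hB
  have hB0 : 0 ≤ B := by
    have : 0 ≤ b - a := by linarith
    positivity
  refine ⟨B, hB0, fun m => ?_⟩
  set W : ℝ → ℝ := fun y => 1 + ∑ s ∈ Finset.range m, ymD f s y with hW
  have hWc : Continuous W := by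
    apply continuous_const.add
    exact continuous_finsetSum _ fun s _ => ymD_continuous f hf s
  have hW1 : ∀ y, 1 ≤ W y := fun y => by
    have : 0 ≤ ∑ s ∈ Finset.range m, ymD f s y := Finset.sum_nonneg fun s _ => ymD_nonneg f s y
    simp only [hW]; linarith
  set V : ℝ → ℝ := fun x => ∫ y in a..x, W y with hV
  have hii : ∀ x y, IntervalIntegrable W volume x y := fun x y => hWc.intervalIntegrable x y
  have hVsub : ∀ x y, V y - V x = ∫ t in x..y, W t := fun x y =>
    intervalIntegral.integral_interval_sub_left (hii _ _) (hii _ _)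
  have hVge : ∀ x y, x ≤ y → y - x ≤ V y - V x := by
    intro x y hxy
    rw [hVsub]
    calc y - x = ∫ _ in x..y, (1 : ℝ) := by simp
      _ ≤ _ := intervalIntegral.integral_mono_on hxy (by simp) (hii _ _) fun t _ => hW1 t
  have hVm : StrictMono V := fun x y hxy => by
    have := hVge x y hxy.le
    linarith
  have hVc : Continuous V := intervalIntegral.continuous_primitive hii a
  have hVsurj : Function.Surjective V := by
    apply hVc.surjective
    · refine tendsto_atTop_mono' _ ?_ (tendsto_atTop_add_const_right _ (V a - a) tendsto_id)
      filter_upwards [eventually_ge_atTop a] with x hx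
      have := hVge a x hx
      simp only [id]; linarith
    · refine tendsto_atBot_mono' _ ?_ (tendsto_atBot_add_const_right _ (V a - a) tendsto_id)
      filter_upwards [eventually_le_atBot a] with x hx
      have := hVge x a hx
      simp only [id]; linarith
  choose q hq using hVsurj
  have hVa : V a = 0 := by simp [hV]
  have hle : ∀ x y, V x ≤ V y ↔ x ≤ y := fun x y => hVm.le_iff_le
  refine ⟨fun l => q (l * ε1), ⌊V b / ε1⌋₊ + 1, ?_, ?_, ?_, ?_⟩
  · intro l l' hl
    rw [← hVm.lt_iff_lt, hq, hq]
    have : (l : ℝ) < l' := by exact_mod_cast hl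
    exact mul_lt_mul_of_pos_right this hε1
  · intro y hy
    have hVy : 0 ≤ V y := by rw [← hVa]; exact (hle _ _).2 hy.1
    refine ⟨⌊V y / ε1⌋₊, ?_, ?_, ?_⟩
    · refine Nat.lt_succ_of_le (Nat.floor_mono ?_)
      exact div_le_div_of_nonneg_right ((hle _ _).2 hy.2) hε1.le
    · rw [← hle, hq, ← le_div_iff₀ hε1]
      exact Nat.floor_le (by positivity)
    · rw [← hle, hq, ← div_le_iff₀ hε1]
      push_cast
      exact (Nat.lt_floor_add_one _).le
  · have key : ∀ l : ℕ, ∀ y y', q (l * ε1) ≤ y → y ≤ y' → y' ≤ q ((l + 1 : ℕ) * ε1) →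
        ∀ s < m, |f^[s] y - f^[s] y'| ≤ ε1 := by
      intro l y y' h1 h2 h3 s hs
      rw [← hle, hq] at h1 h3
      have h4 : V y' - V y ≤ ε1 := by push_cast at h3; linarith
      choose d hd hdD using fun y => ymD_deriv f hf s y
      have hder : deriv f^[s] = d := funext fun y => (hd y).deriv
      have hsm : ContDiff ℝ (⊤ : ℕ∞) f^[s] := by
        clear hder hdD hd hs
        induction s with
        | zero => exact contDiff_id
        | succ s ihs => rw [Function.iterate_succ']; exact hf.comp ihs
      have hcd : Continuous d := by rw [← hder]; exact hsm.continuous_deriv (by simp)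
      have hftc : ∫ t in y..y', d t = f^[s] y' - f^[s] y :=
        intervalIntegral.integral_eq_sub_of_hasDerivAt (fun x _ => hd x)
          (hcd.intervalIntegrable _ _)
      rw [abs_sub_comm, ← hftc]
      refine (intervalIntegral.abs_integral_le_integral_abs h2).trans (le_trans ?_ h4)
      rw [hVsub]
      refine intervalIntegral.integral_mono_on h2 (hcd.abs.intervalIntegrable _ _) (hii _ _) ?_
      intro t _
      rw [hdD]
      have : ymD f s t ≤ ∑ s ∈ Finset.range m, ymD f s t :=
        Finset.single_le_sum (f := fun s => ymD f s t) (fun s _ => ymD_nonneg f s t)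
          (Finset.mem_range.2 hs)
      simp only [hW]; linarith
    intro l y y' h1 h2 h3 h4 s hs
    rcases le_total y y' with h | h
    · exact key l y y' h1 h h4 s hs
    · rw [abs_sub_comm]; exact key l y' y h3 h h2 s hs
  · have hVb0 : 0 ≤ V b := by rw [← hVa]; exact (hle _ _).2 hab.le
    have hVb : V b ≤ (b - a) + ∑ s ∈ Finset.range m, C0 * Real.exp (s * (h + 2 * (δ / 3))) := by
      simp only [hV, hW]
      rw [intervalIntegral.integral_add (by simp)
        ((continuous_finsetSum _ fun s _ => ymD_continuous f hf s).intervalIntegrable _ _),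
        intervalIntegral.integral_finsetSum
          (fun s _ => (ymD_continuous f hf s).intervalIntegrable _ _)]
      have : ∫ _ in a..b, (1 : ℝ) = b - a := by simp
      rw [this]
      gcongr with s hs
      exact hgr s
    have hsum : ∑ s ∈ Finset.range m, C0 * Real.exp (s * (h + 2 * (δ / 3))) ≤
        C0 * (3 / δ) * Real.exp (m * (h + δ)) := by
      have h1 : ∀ s ∈ Finset.range m, C0 * Real.exp (s * (h + 2 * (δ / 3))) ≤
          C0 * Real.exp (m * (h + 2 * (δ / 3))) := by
        intro s hs
        have : (s : ℝ) ≤ m := by exact_mod_cast (Finset.mem_range.1 hs).le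
        gcongr
      refine (Finset.sum_le_card_nsmul _ _ _ h1).trans ?_
      rw [Finset.card_range, nsmul_eq_mul]
      have h2 : (m : ℝ) ≤ 3 / δ * Real.exp (m * (δ / 3)) := by
        have := Real.add_one_le_exp ((m : ℝ) * (δ / 3))
        calc (m : ℝ) = 3 / δ * (m * (δ / 3)) := by field_simp
          _ ≤ _ := by gcongr; linarith
      calc (m : ℝ) * (C0 * Real.exp (m * (h + 2 * (δ / 3))))
          ≤ (3 / δ * Real.exp (m * (δ / 3))) * (C0 * Real.exp (m * (h + 2 * (δ / 3)))) := by gcongr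
        _ = C0 * (3 / δ) * (Real.exp (m * (δ / 3)) * Real.exp (m * (h + 2 * (δ / 3)))) := by ring
        _ = _ := by rw [← Real.exp_add]; congr 2; ring
    have hE : 1 ≤ Real.exp (m * (h + δ)) := Real.one_le_exp (by positivity)
    push_cast
    have hfl := Nat.floor_le (div_nonneg hVb0 hε1.le)
    calc (⌊V b / ε1⌋₊ : ℝ) + 1 + 1 ≤ V b / ε1 + 2 := by linarith
      _ ≤ ((b - a) * Real.exp (m * (h + δ)) + C0 * (3 / δ) * Real.exp (m * (h + δ))) / ε1
          + 2 * Real.exp (m * (h + δ)) := by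
          have : (b - a) ≤ (b - a) * Real.exp (m * (h + δ)) :=
            le_mul_of_one_le_right (by linarith) hE
          gcongr
          · linarith
          · linarith
      _ = _ := by rw [hB]; ring

theorem elog_coe (k : ℕ) : elog (k : ℕ∞) = ((Real.log k : ℝ) : EReal) := rfl

theorem elog_top : elog ⊤ = ⊤ := rfl

theorem elog_le {u : ℕ∞} {k : ℕ} (h : u ≤ k) : elog u ≤ ((Real.log k : ℝ) : EReal) := by
  induction u using ENat.recTopCoe with
  | top => simp at h
  | coe m =>
    rw [elog_coe, EReal.coe_le_coe_iff]
    have h' : m ≤ k := by exact_mod_cast h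
    rcases Nat.eq_zero_or_pos m with rfl | hm
    · simpa using Real.log_natCast_nonneg k
    · exact Real.log_le_log (by exact_mod_cast hm) (by exact_mod_cast h')

theorem ent_limsup_le (u : ℕ → ℕ∞) (c d : ℝ)
    (hu : ∀ᶠ n in atTop, ∃ k : ℕ, u n ≤ k ∧ Real.log k ≤ n * c + d) :
    Filter.atTop.limsup (fun n : ℕ => (((n : ℝ)⁻¹ : ℝ) : EReal) * elog (u n)) ≤ (c : EReal) := by
  have ht : Tendsto (fun n : ℕ => ((c + d * (n : ℝ)⁻¹ : ℝ) : EReal)) atTop (𝓝 (c : EReal)) := by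
    rw [EReal.tendsto_coe]
    have : Tendsto (fun n : ℕ => c + d * (n : ℝ)⁻¹) atTop (𝓝 (c + d * 0)) :=
      (tendsto_inv_atTop_nhds_zero_nat.const_mul d).const_add c
    simpa using this
  rw [← ht.limsup_eq]
  refine limsup_le_limsup ?_
  filter_upwards [hu, eventually_gt_atTop 0] with n hn hn0
  obtain ⟨k, hk, hlog⟩ := hn
  have hn' : (0 : ℝ) < n := by exact_mod_cast hn0
  calc (((n : ℝ)⁻¹ : ℝ) : EReal) * elog (u n)
      ≤ (((n : ℝ)⁻¹ : ℝ) : EReal) * ((n * c + d : ℝ) : EReal) := by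
        apply mul_le_mul_of_nonneg_left
        · exact (elog_le hk).trans (EReal.coe_le_coe_iff.2 hlog)
        · exact EReal.coe_nonneg.2 (by positivity)
    _ = ((c + d * (n : ℝ)⁻¹ : ℝ) : EReal) := by
        rw [← EReal.coe_mul]
        congr 1
        field_simp

theorem ent_le_limsup (u : ℕ → ℕ∞) (c : ℝ)
    (hu : ∀ n ≥ 1, ∀ k : ℕ, u n = k → n * c ≤ Real.log k) :
    (c : EReal) ≤
      Filter.atTop.limsup (fun n : ℕ => (((n : ℝ)⁻¹ : ℝ) : EReal) * elog (u n)) := by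
  apply le_limsup_of_frequently_le'
  apply Eventually.frequently
  filter_upwards [eventually_gt_atTop 0] with n hn0
  have hn' : (0 : ℝ) < n := by exact_mod_cast hn0
  rcases h : u n with _ | k
  · change (c : EReal) ≤ _ * ⊤
    rw [EReal.coe_mul_top_of_pos (by positivity)]
    exact le_top
  · have := hu n hn0 k h
    change (c : EReal) ≤ _ * ((Real.log k : ℝ) : EReal)
    rw [← EReal.coe_mul, EReal.coe_le_coe_iff]
    rw [inv_mul_eq_div, le_div_iff₀ hn', mul_comm]
    exact this

section
variable {X : Type*} [MetricSpace X]

/-- colorings whose classes have small dynamical diameter -/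
def colP (f : X → X) (N : ℕ) (ε : ℝ) (m : ℕ) : Prop :=
  ∃ col : X → Fin N, ∀ x y, col x = col y → ∀ s < m, dist (f^[s] x) (f^[s] y) < ε

theorem colP_add (f : X → X) (N N' : ℕ) (ε : ℝ) (m k : ℕ) (h1 : colP f N ε m)
    (h2 : colP f N' ε k) : colP f (N * N') ε (m + k) := by
  obtain ⟨c1, h1⟩ := h1
  obtain ⟨c2, h2⟩ := h2
  refine ⟨fun x => finProdFinEquiv (c1 x, c2 (f^[m] x)), fun x y hxy s hs => ?_⟩
  have h := finProdFinEquiv.injective hxy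
  rw [Prod.mk.injEq] at h
  by_cases hsm : s < m
  · exact h1 x y h.1 s hsm
  · have := h2 _ _ h.2 (s - m) (by omega)
    rwa [← Function.iterate_add_apply, ← Function.iterate_add_apply,
      Nat.sub_add_cancel (by omega)] at this

theorem colP_mul (f : X → X) (N : ℕ) (ε : ℝ) (m q : ℕ) (h1 : colP f N ε m) :
    colP f (N ^ q) ε (m * q) := by
  induction q with
  | zero => exact ⟨fun _ => ⟨0, by simp⟩, fun x y _ s hs => by simp at hs⟩
  | succ q ih => rw [pow_succ, Nat.mul_succ]; exact colP_add f _ _ ε _ _ ih h1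

theorem coverNum_le_of_cover (f : X → X) (ε : ℝ) (n : ℕ) (S : Set X) (F : Finset X) (hF : ↑F ⊆ S)
    (hc : ∀ x ∈ S, ∃ y ∈ F, ∀ s < n, dist (f^[s] x) (f^[s] y) < ε) :
    coverNum f ε n S ≤ F.card := by
  apply sInf_le
  refine ⟨F, hF, fun x hx => ?_, rfl⟩
  obtain ⟨y, hy, h⟩ := hc x hx
  exact mem_iUnion₂.2 ⟨y, hy, h⟩

/-- general counting principle: a coloring of (a set containing) `S` bounds the cover number -/
theorem coverNum_le_of_col (f : X → X) (ε : ℝ) (n : ℕ) (S : Set X) {ι : Type*} (B : Finset ι)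
    (col : X → ι → Prop) (hcol : ∀ x ∈ S, ∃ i ∈ B, col x i)
    (hc : ∀ x ∈ S, ∀ y ∈ S, ∀ i ∈ B, col x i → col y i → ∀ s < n, dist (f^[s] x) (f^[s] y) < ε) :
    coverNum f ε n S ≤ B.card := by
  classical
  set B' := B.filter fun i => ∃ x ∈ S, col x i with hB'
  have hch : ∀ i : B', ∃ x ∈ S, col x i := fun i => (Finset.mem_filter.1 i.2).2
  choose g hgS hg using hch
  have hle : coverNum f ε n S ≤ ((Finset.univ.image g).card : ℕ) := by
    apply coverNum_le_of_cover
    · intro x hx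
      obtain ⟨i, _, rfl⟩ := Finset.mem_image.1 (Finset.mem_coe.1 hx)
      exact hgS i
    · intro x hx
      obtain ⟨i, hi, hxi⟩ := hcol x hx
      have hi' : i ∈ B' := Finset.mem_filter.2 ⟨hi, x, hx, hxi⟩
      exact ⟨g ⟨i, hi'⟩, Finset.mem_image_of_mem _ (Finset.mem_univ _),
        hc x hx _ (hgS _) i hi hxi (hg _)⟩
  refine hle.trans ?_
  have : (Finset.univ.image g).card ≤ B.card := by
    refine Finset.card_image_le.trans ?_
    rw [Finset.card_univ, Fintype.card_coe]
    exact Finset.card_filter_le _ _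
  exact_mod_cast this

theorem coverNum_le_of_colP (f : X → X) (N : ℕ) (ε : ℝ) (m n : ℕ) (hn : n ≤ m)
    (h : colP f N ε m) : coverNum f ε n univ ≤ N := by
  obtain ⟨col, h⟩ := h
  have := coverNum_le_of_col f ε n univ (Finset.univ : Finset (Fin N)) (fun x i => col x = i)
    (fun x _ => ⟨col x, Finset.mem_univ _, rfl⟩)
    (fun x _ y _ i _ h1 h2 s hs => h x y (h1.trans h2.symm) s (by omega))
  simpa using this

theorem limsup_le_of_colP [Nonempty X] (f : X → X) (N : ℕ) (ε : ℝ) (m : ℕ) (hm : 1 ≤ m)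
    (h : colP f N ε m) :
    Filter.atTop.limsup (fun n : ℕ => (((n : ℝ)⁻¹ : ℝ) : EReal) * elog (coverNum f ε n univ)) ≤
      ((Real.log N / m : ℝ) : EReal) := by
  have hN : 0 ≤ Real.log N := Real.log_natCast_nonneg N
  have hm' : (0 : ℝ) < m := by exact_mod_cast hm
  apply ent_limsup_le _ _ (Real.log N)
  refine Eventually.of_forall fun n => ⟨N ^ (n / m + 1), ?_, ?_⟩
  · refine coverNum_le_of_colP f _ ε (m * (n / m + 1)) n ?_ (colP_mul f N ε m _ h)
    have := Nat.div_add_mod n m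
    have := Nat.mod_lt n hm
    rw [Nat.mul_succ]; omega
  · push_cast
    rw [Real.log_pow]
    push_cast
    have : ((n / m : ℕ) : ℝ) ≤ n / m := Nat.cast_div_le
    calc (((n / m : ℕ) : ℝ) + 1) * Real.log N ≤ (n / m + 1) * Real.log N := by gcongr
      _ = _ := by ring

theorem exists_sep [Nonempty X] (f : X → X) (η : ℝ) (h : (η : EReal) < htop f) :
    ∃ ε > 0, ∀ m ≥ 1, ∃ E : Finset X, (∀ x ∈ E, ∀ y ∈ E, x ≠ y →
      ∃ s < m, ε ≤ dist (f^[s] x) (f^[s] y)) ∧ Real.exp (m * η) ≤ E.card := by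
  classical
  unfold htop entSet at h
  rw [lt_iSup_iff] at h
  obtain ⟨⟨ε, hε⟩, h⟩ := h
  refine ⟨ε / 2, by positivity, fun m hm => ?_⟩
  by_contra hcon
  push Not at hcon
  have hm' : (0 : ℝ) < m := by exact_mod_cast hm
  set Pr : ℕ → Prop := fun k => ∃ E : Finset X, (∀ x ∈ E, ∀ y ∈ E, x ≠ y →
      ∃ s < m, ε / 2 ≤ dist (f^[s] x) (f^[s] y)) ∧ E.card = k with hPr
  have hbd : ∀ k, Pr k → k ≤ ⌊Real.exp (m * η)⌋₊ := by
    rintro k ⟨E, hE, rfl⟩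
    exact Nat.le_floor (hcon E hE).le
  have h0 : Pr 0 := ⟨∅, by simp, rfl⟩
  have hmax := Nat.findGreatest_spec (P := Pr) (Nat.zero_le ⌊Real.exp (m * η)⌋₊) h0
  set k := Nat.findGreatest Pr ⌊Real.exp (m * η)⌋₊ with hk
  obtain ⟨E, hE, hEk⟩ := hmax
  have hspan : ∀ x, ∃ e ∈ E, ∀ s < m, dist (f^[s] x) (f^[s] e) < ε / 2 := by
    intro x
    by_contra hx
    push Not at hx
    have hxE : x ∉ E := by
      intro hxE
      obtain ⟨s, _, hs⟩ := hx x hxE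
      rw [dist_self] at hs
      linarith
    have hP : Pr (k + 1) := by
      refine ⟨insert x E, ?_, by rw [Finset.card_insert_of_notMem hxE, hEk]⟩
      intro y hy z hz hyz
      rcases Finset.mem_insert.1 hy with h1 | h1 <;> rcases Finset.mem_insert.1 hz with h2 | h2
      · exact (hyz (h1.trans h2.symm)).elim
      · rw [h1]
        exact hx z h2
      · obtain ⟨s, h3, h4⟩ := hx y h1
        exact ⟨s, h3, by rw [h2, dist_comm]; exact h4⟩
      · exact hE y h1 z h2 hyz
    have := Nat.le_findGreatest (hbd _ hP) hP
    omega
  choose e heE he using hspan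
  have hcol : colP f k ε m := by
    rw [← hEk]
    refine ⟨fun x => E.equivFin ⟨e x, heE x⟩, fun x y hxy s hs => ?_⟩
    have h1 : e x = e y := by
      have := E.equivFin.injective hxy
      exact congrArg Subtype.val this
    calc dist (f^[s] x) (f^[s] y) ≤ dist (f^[s] x) (f^[s] (e x)) + dist (f^[s] y) (f^[s] (e x)) :=
          dist_triangle_right _ _ _
      _ < ε / 2 + ε / 2 := add_lt_add (he x s hs) (by rw [h1]; exact he y s hs)
      _ = ε := by ring
  have h2 := h.trans_le (limsup_le_of_colP f k ε m hm hcol)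
  rw [EReal.coe_lt_coe_iff, lt_div_iff₀ hm'] at h2
  have h3 := hcon E hE
  rw [hEk] at h3
  have hk0 : 0 < k := by
    rw [← hEk]
    exact Finset.card_pos.2 ⟨e (Classical.arbitrary X), heE _⟩
  have h4 : Real.log k < m * η := (Real.log_lt_iff_lt_exp (by exact_mod_cast hk0)).2 h3
  linarith

theorem exists_cover (f : X → X) (c : ℝ) (h : htop f < (c : EReal)) (ε : ℝ) (hε : 0 < ε) :
    ∃ m0 : ℕ, ∀ m ≥ m0, ∃ A : Finset X, (∀ y, ∃ x ∈ A, ∀ s < m, dist (f^[s] y) (f^[s] x) < ε) ∧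
      (A.card : ℝ) ≤ Real.exp (m * c) := by
  have h1 : Filter.atTop.limsup (fun n : ℕ => (((n : ℝ)⁻¹ : ℝ) : EReal) *
      elog (coverNum f ε n univ)) < c :=
    (le_iSup (fun ε : {ε : ℝ // 0 < ε} => Filter.atTop.limsup (fun n : ℕ =>
      (((n : ℝ)⁻¹ : ℝ) : EReal) * elog (coverNum f ε n univ))) ⟨ε, hε⟩).trans_lt h
  have h2 := eventually_lt_of_limsup_lt h1
  obtain ⟨m0, hm0⟩ := eventually_atTop.1 (h2.and (eventually_gt_atTop 0))
  refine ⟨m0, fun m hm => ?_⟩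
  obtain ⟨h3, hmp⟩ := hm0 m hm
  have hm' : (0 : ℝ) < m := by exact_mod_cast hmp
  have hne : coverNum f ε m univ ≠ ⊤ := by
    intro ht
    rw [ht, elog_top, EReal.coe_mul_top_of_pos (by positivity)] at h3
    exact not_top_lt h3
  have hSne : {k : ℕ∞ | ∃ F : Finset X, (↑F : Set X) ⊆ univ ∧
      ((univ : Set X) ⊆ ⋃ x ∈ F, dynBall f ε m x) ∧
      k = F.card}.Nonempty := by
    by_contra hS
    rw [not_nonempty_iff_eq_empty] at hS
    apply hne
    unfold coverNum
    rw [hS, sInf_empty]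
  obtain ⟨F, -, hF, hFc⟩ := csInf_mem hSne
  change coverNum f ε m univ = _ at hFc
  refine ⟨F, fun y => ?_, ?_⟩
  · obtain ⟨x, hx, hy⟩ := mem_iUnion₂.1 (hF (mem_univ y))
    exact ⟨x, hx, hy⟩
  · rw [hFc, elog_coe, ← EReal.coe_mul, EReal.coe_lt_coe_iff, inv_mul_eq_div, div_lt_iff₀ hm'] at h3
    rcases Nat.eq_zero_or_pos F.card with h0 | h0
    · rw [h0]; simpa using (Real.exp_pos _).le
    · rw [mul_comm]
      exact (Real.log_le_iff_le_exp (by exact_mod_cast h0)).1 h3.le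

end

theorem ex_lip (f : ℝ → ℝ) (hf : ContDiff ℝ (⊤ : ℕ∞) f) (a b : ℝ) :
    ∃ L : ℝ, 1 ≤ L ∧ ∀ x ∈ Icc a b, ∀ y ∈ Icc a b, |f x - f y| ≤ L * |x - y| := by
  have hc : Continuous (deriv f) := hf.continuous_deriv (by simp)
  obtain ⟨C, hC⟩ := isCompact_Icc.exists_bound_of_continuousOn (s := Icc a b) hc.continuousOn
  refine ⟨max 1 C, le_max_left _ _, fun x hx y hy => ?_⟩
  have hd : Differentiable ℝ f := hf.differentiable (by simp)
  have := (convex_Icc a b).norm_image_sub_le_of_norm_deriv_le (f := f) (C := C)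
    (fun z _ => hd z) hC hy hx
  rw [Real.norm_eq_abs, Real.norm_eq_abs] at this
  exact this.trans (mul_le_mul_of_nonneg_right (le_max_right _ _) (abs_nonneg _))

theorem iter_lip (f : ℝ → ℝ) (a b L : ℝ) (hmaps : MapsTo f (Icc a b) (Icc a b)) (hL : 1 ≤ L)
    (hlip : ∀ x ∈ Icc a b, ∀ y ∈ Icc a b, |f x - f y| ≤ L * |x - y|) (s : ℕ) :
    ∀ x ∈ Icc a b, ∀ y ∈ Icc a b, |f^[s] x - f^[s] y| ≤ L ^ s * |x - y| := by
  intro x hx y hy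
  induction s with
  | zero => simp
  | succ s ih =>
    rw [Function.iterate_succ_apply', Function.iterate_succ_apply', pow_succ']
    calc _ ≤ L * |f^[s] x - f^[s] y| := hlip _ (hmaps.iterate s hx) _ (hmaps.iterate s hy)
      _ ≤ L * (L ^ s * |x - y|) := by gcongr
      _ = _ := by ring

theorem iter_coe (f : ℝ → ℝ) (a b : ℝ) (hmaps : MapsTo f (Icc a b) (Icc a b)) (s : ℕ)
    (x : Icc a b) :
    (((fun x : Icc a b => (⟨f (x : ℝ), hmaps x.2⟩ : Icc a b))^[s] x : Icc a b) : ℝ) =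
      f^[s] (x : ℝ) := by
  induction s with
  | zero => rfl
  | succ s ih => rw [Function.iterate_succ_apply', Function.iterate_succ_apply', ← ih]

theorem htop_fin (f : ℝ → ℝ) (hf : ContDiff ℝ (⊤ : ℕ∞) f) (a b : ℝ) (_hab : a < b)
    (hmaps : MapsTo f (Icc a b) (Icc a b)) :
    htop (fun x : Icc a b => (⟨f (x : ℝ), hmaps x.2⟩ : Icc a b)) ≠ ⊤ := by
  obtain ⟨L, hL, hlip⟩ := ex_lip f hf a b
  have key : htop (fun x : Icc a b => (⟨f (x : ℝ), hmaps x.2⟩ : Icc a b)) ≤ (Real.log L : ℝ) := by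
    unfold htop entSet
    refine iSup_le fun ⟨ε, hε⟩ => ?_
    apply ent_limsup_le _ _ (Real.log (2 * (b - a) / ε + 1))
    refine Eventually.of_forall fun m => ?_
    have hLm : (1 : ℝ) ≤ L ^ m := one_le_pow₀ hL
    have hLm0 : (0 : ℝ) < L ^ m := by linarith
    set c : ℝ := 2 * L ^ m / ε with hc
    have hc0 : 0 < c := by positivity
    have hba : 0 < b - a := by linarith
    refine ⟨⌊(b - a) * c⌋₊ + 1, ?_, ?_⟩
    · apply coverNum_le_of_colP _ _ ε m m le_rfl
      refine ⟨fun x => ⟨⌊((x : ℝ) - a) * c⌋₊, Nat.lt_succ_of_le (Nat.floor_le_floor ?_)⟩, ?_⟩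
      · have := x.2.2
        gcongr
      · intro x y hxy s hs
        have hxy' : ⌊((x : ℝ) - a) * c⌋₊ = ⌊((y : ℝ) - a) * c⌋₊ := congrArg Fin.val hxy
        rw [Subtype.dist_eq, iter_coe, iter_coe, Real.dist_eq]
        have hx0 : 0 ≤ ((x : ℝ) - a) * c := mul_nonneg (by linarith [x.2.1]) hc0.le
        have hy0 : 0 ≤ ((y : ℝ) - a) * c := mul_nonneg (by linarith [y.2.1]) hc0.le
        have h1 := Nat.floor_le hx0
        have h2 := Nat.lt_floor_add_one (((x : ℝ) - a) * c)
        have h3 := Nat.floor_le hy0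
        have h4 := Nat.lt_floor_add_one (((y : ℝ) - a) * c)
        rw [hxy'] at h1 h2
        have h5 : |(x : ℝ) - y| * c ≤ 1 := by
          rw [← abs_of_pos hc0, ← abs_mul, abs_le]
          constructor <;> linarith
        have h6 : |(x : ℝ) - y| * L ^ m ≤ ε / 2 := by
          have : |(x : ℝ) - y| * L ^ m = (|(x : ℝ) - y| * c) * (ε / 2) := by
            rw [hc]; field_simp
          rw [this]
          nlinarith
        calc _ ≤ L ^ s * |(x : ℝ) - y| := iter_lip f a b L hmaps hL hlip s _ x.2 _ y.2
          _ ≤ L ^ m * |(x : ℝ) - y| := by gcongr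
          _ < ε := by linarith
    · rw [← Real.log_pow, ← Real.log_mul (by positivity) (by positivity)]
      apply Real.log_le_log (by positivity)
      push_cast
      have h1 := Nat.floor_le (show 0 ≤ (b - a) * c by positivity)
      have : L ^ m * (2 * (b - a) / ε + 1) = (b - a) * c + L ^ m := by rw [hc]; field_simp
      linarith
  intro h
  rw [h] at key
  exact absurd key (by simp)

/-- the covering hypothesis of `ym_partition` -/
theorem ex_hcov (f : ℝ → ℝ) (a b : ℝ)
    (hmaps : MapsTo f (Icc a b) (Icc a b)) (h : ℝ)
    (hh : htop (fun x : Icc a b => (⟨f (x : ℝ), hmaps x.2⟩ : Icc a b)) = (h : EReal)) :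
    ∀ ε > 0, ∀ δ > 0, ∃ m0 : ℕ, ∀ m ≥ m0, ∃ A : Finset ℝ,
      (∀ y ∈ Icc a b, ∃ c ∈ A, ∀ s < m, |f^[s] y - f^[s] c| < ε) ∧
      (A.card : ℝ) ≤ Real.exp (m * (h + δ)) := by
  classical
  intro ε hε δ hδ
  obtain ⟨m0, hm0⟩ := exists_cover (fun x : Icc a b => (⟨f (x : ℝ), hmaps x.2⟩ : Icc a b)) (h + δ)
    (by rw [hh, EReal.coe_lt_coe_iff]; linarith) ε hε
  refine ⟨m0, fun m hm => ?_⟩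
  obtain ⟨A, hA, hc⟩ := hm0 m hm
  refine ⟨A.image Subtype.val, fun y hy => ?_, ?_⟩
  · obtain ⟨x, hx, h1⟩ := hA ⟨y, hy⟩
    refine ⟨x, Finset.mem_image_of_mem _ hx, fun s hs => ?_⟩
    have := h1 s hs
    rwa [Subtype.dist_eq, iter_coe, iter_coe, Real.dist_eq] at this
  · refine le_trans ?_ hc
    exact_mod_cast Finset.card_image_le

theorem F_iter {n : ℕ} (f : Fin n → ℝ → ℝ) (K : Set (Euc n))
    (F : ↥K → ↥K)
    (hF : ∀ (x : ↥K) (i : Fin n), ((F x : Euc n) i) = f i ((x : Euc n) i))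
    (s : ℕ) (x : ↥K) (i : Fin n) :
    ((F^[s] x : Euc n) i) = (f i)^[s] ((x : Euc n) i) := by
  induction s with
  | zero => rfl
  | succ s ih => rw [Function.iterate_succ_apply', Function.iterate_succ_apply', ← ih, hF]

theorem F_dist_ge {n : ℕ} (f : Fin n → ℝ → ℝ) (K : Set (Euc n))
    (F : ↥K → ↥K)
    (hF : ∀ (x : ↥K) (i : Fin n), ((F x : Euc n) i) = f i ((x : Euc n) i))
    (s : ℕ) (x y : ↥K) (i : Fin n) :
    |(f i)^[s] ((x : Euc n) i) - (f i)^[s] ((y : Euc n) i)| ≤ dist (F^[s] x) (F^[s] y) := by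
  rw [← F_iter f K F hF, ← F_iter f K F hF, Subtype.dist_eq, dist_eq_norm]
  have := PiLp.norm_apply_le ((F^[s] x : Euc n) - (F^[s] y : Euc n)) i
  rw [PiLp.sub_apply, Real.norm_eq_abs] at this
  exact this

theorem F_dist_le {n : ℕ} (f : Fin n → ℝ → ℝ) (K : Set (Euc n))
    (F : ↥K → ↥K)
    (hF : ∀ (x : ↥K) (i : Fin n), ((F x : Euc n) i) = f i ((x : Euc n) i))
    (s : ℕ) (x y : ↥K) (e : ℝ)
    (h : ∀ i, |(f i)^[s] ((x : Euc n) i) - (f i)^[s] ((y : Euc n) i)| ≤ e) :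
    dist (F^[s] x) (F^[s] y) ≤ n * e := by
  rw [Subtype.dist_eq, EuclideanSpace.dist_eq]
  have h0 : ∀ i : Fin n, 0 ≤ e := fun i => (abs_nonneg _).trans (h i)
  have hne : 0 ≤ (n : ℝ) * e := by
    rcases Nat.eq_zero_or_pos n with hn | hn
    · subst hn; simp
    · exact mul_nonneg (by positivity) (h0 ⟨0, hn⟩)
  apply Real.sqrt_le_iff.2 ⟨hne, ?_⟩
  have h1 : ∀ i ∈ (Finset.univ : Finset (Fin n)),
      dist ((F^[s] x : Euc n) i) ((F^[s] y : Euc n) i) ^ 2 ≤ e ^ 2 := by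
    intro i _
    rw [Real.dist_eq, F_iter f K F hF, F_iter f K F hF]
    exact pow_le_pow_left₀ (abs_nonneg _) (h i) 2
  refine (Finset.sum_le_sum h1).trans ?_
  rw [Finset.sum_const, Finset.card_univ, Fintype.card_fin, nsmul_eq_mul, mul_pow]
  apply mul_le_mul_of_nonneg_right _ (sq_nonneg e)
  have : n ≤ n ^ 2 := Nat.le_self_pow (by norm_num) n
  exact_mod_cast this

theorem htop_F_ge {n : ℕ} (a b : Fin n → ℝ) (f : Fin n → ℝ → ℝ) (K : Set (Euc n))
    (hK : K = {x : Euc n | ∀ i, x i ∈ Set.Icc (a i) (b i)}) (F : ↥K → ↥K)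
    (hF : ∀ (x : ↥K) (i : Fin n), ((F x : Euc n) i) = f i ((x : Euc n) i))
    (hn : 1 ≤ n) (hab : ∀ i, a i < b i)
    (hmaps : ∀ i, Set.MapsTo (f i) (Set.Icc (a i) (b i)) (Set.Icc (a i) (b i)))
    (η : Fin n → ℝ) (hη : ∀ i, (η i : EReal) < htop (fun x : Set.Icc (a i) (b i) =>
      (⟨f i (x : ℝ), hmaps i x.2⟩ : Set.Icc (a i) (b i)))) :
    ((∑ i, η i : ℝ) : EReal) ≤ htop F := by
  classical
  have hsep := fun i => by
    haveI : Nonempty (Icc (a i) (b i)) := ⟨⟨a i, le_rfl, (hab i).le⟩⟩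
    exact exists_sep (fun x : Set.Icc (a i) (b i) =>
      (⟨f i (x : ℝ), hmaps i x.2⟩ : Set.Icc (a i) (b i))) (η i) (hη i)
  choose ε hε hE using hsep
  haveI : Nonempty (Fin n) := ⟨⟨0, hn⟩⟩
  obtain ⟨i0, -, hi0⟩ := Finset.exists_min_image Finset.univ ε Finset.univ_nonempty
  have hmin : ∀ i, ε i0 ≤ ε i := fun i => hi0 i (Finset.mem_univ i)
  refine le_trans ?_ (le_iSup (fun ε : {ε : ℝ // 0 < ε} => Filter.atTop.limsup (fun n : ℕ =>
      (((n : ℝ)⁻¹ : ℝ) : EReal) * elog (coverNum F ε n univ))) ⟨ε i0 / 2, half_pos (hε i0)⟩)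
  apply ent_le_limsup
  intro m hm k hk
  have hEm := fun i => hE i m hm
  choose E hEs hEc using hEm
  have hprod : Real.exp (m * ∑ i, η i) ≤ ((∏ i, (E i).card : ℕ) : ℝ) := by
    rw [Finset.mul_sum, Real.exp_sum]
    push_cast
    exact Finset.prod_le_prod (fun i _ => (Real.exp_pos _).le) (fun i _ => hEc i)
  have hcard : (∏ i, (E i).card : ℕ) ≤ k := by
    have hmem : (k : ℕ∞) ∈ {m' : ℕ∞ | ∃ A : Finset ↥K, (↑A : Set ↥K) ⊆ univ ∧
        ((univ : Set ↥K) ⊆ ⋃ x ∈ A, dynBall F (ε i0 / 2) m x) ∧ m' = A.card} := by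
      rw [← hk]
      apply csInf_mem
      by_contra hS
      rw [not_nonempty_iff_eq_empty] at hS
      change coverNum F (ε i0 / 2) m univ = k at hk
      unfold coverNum at hk
      rw [hS, sInf_empty] at hk
      exact absurd hk (by simp)
    obtain ⟨A, -, hA, hAk⟩ := hmem
    have hAk' : k = A.card := by exact_mod_cast hAk
    rw [hAk', ← Fintype.card_piFinset]
    have hpt : ∀ v : (i : Fin n) → Icc (a i) (b i),
        WithLp.toLp 2 (fun i => (v i : ℝ)) ∈ K := by
      intro v
      rw [hK]
      exact fun i => (v i).2
    have hball : ∀ v : (i : Fin n) → Icc (a i) (b i), ∃ x ∈ A, ∀ s < m,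
        dist (F^[s] ⟨_, hpt v⟩) (F^[s] x) < ε i0 / 2 := by
      intro v
      obtain ⟨x, hx, hy⟩ := mem_iUnion₂.1 (hA (mem_univ ⟨_, hpt v⟩))
      exact ⟨x, hx, hy⟩
    choose g hgA hg using hball
    apply Finset.card_le_card_of_injOn g (fun v _ => hgA v)
    intro v hv w hw hvw
    by_contra hne
    obtain ⟨i, hi⟩ := Function.ne_iff.1 hne
    have hv' := Fintype.mem_piFinset.1 (Finset.mem_coe.1 hv) i
    have hw' := Fintype.mem_piFinset.1 (Finset.mem_coe.1 hw) i
    obtain ⟨s, hs, hd⟩ := hEs i _ hv' _ hw' hi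
    rw [Subtype.dist_eq, iter_coe, iter_coe, Real.dist_eq] at hd
    have h1 := F_dist_ge f K F hF s ⟨_, hpt v⟩ ⟨_, hpt w⟩ i
    have h2 := hg v s hs
    have h3 := hg w s hs
    rw [← hvw] at h3
    have h4 := dist_triangle_right (F^[s] ⟨_, hpt v⟩) (F^[s] ⟨_, hpt w⟩) (F^[s] (g v))
    have h5 := hmin i
    have h6 : ε i ≤ dist (F^[s] ⟨_, hpt v⟩) (F^[s] ⟨_, hpt w⟩) := hd.trans h1
    linarith
  have hk' : Real.exp (m * ∑ i, η i) ≤ (k : ℝ) := hprod.trans (by exact_mod_cast hcard)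
  exact (Real.le_log_iff_exp_le ((Real.exp_pos _).trans_le hk')).2 hk'

theorem multi_poly {k n i : ℕ} (M : ContinuousMultilinearMap ℝ (fun _ : Fin i => Euc k) (Euc n))
    (j : Fin n) : ∃ p : MvPolynomial (Fin k) ℝ, p.totalDegree ≤ i ∧
      ∀ t : Euc k, MvPolynomial.eval (fun l => t l) p = (M fun _ => t) j := by
  classical
  refine ⟨∑ r : Fin i → Fin k, MvPolynomial.C ((M fun l => EuclideanSpace.single (r l) (1 : ℝ)) j) *
    ∏ l, MvPolynomial.X (r l), ?_, fun t => ?_⟩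
  · refine MvPolynomial.totalDegree_finsetSum_le fun r _ => ?_
    refine (MvPolynomial.totalDegree_mul _ _).trans ?_
    rw [MvPolynomial.totalDegree_C, zero_add]
    refine (MvPolynomial.totalDegree_finsetProd _ _).trans ?_
    simp
  · have ht : t = ∑ l, (t l) • EuclideanSpace.single l (1 : ℝ) := by
      ext l
      simp [Finset.sum_apply, Pi.single_apply]
    have h1 : (M fun _ => t) = ∑ r : Fin i → Fin k,
        (∏ l, t (r l)) • M fun l => EuclideanSpace.single (r l) (1 : ℝ) := by
      conv_lhs => rw [ht]
      have := M.toMultilinearMap.map_sum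
        (g := fun (_ : Fin i) (l : Fin k) => (t l) • EuclideanSpace.single l (1 : ℝ))
      refine this.trans (Finset.sum_congr rfl fun r _ => ?_)
      exact M.toMultilinearMap.map_smul_univ (fun l => t (r l)) _
    rw [h1, map_sum]
    simp only [map_mul, MvPolynomial.eval_C, map_prod, MvPolynomial.eval_X]
    rw [WithLp.ofLp_sum, Finset.sum_apply]
    refine Finset.sum_congr rfl fun r _ => ?_
    rw [PiLp.smul_apply, smul_eq_mul, mul_comm]

theorem cube_norm {k : ℕ} (t : Euc k) (ht : t ∈ unitCube k) : ‖t‖ ≤ k + 1 := by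
  rw [EuclideanSpace.norm_eq]
  apply Real.sqrt_le_iff.2 ⟨by positivity, ?_⟩
  have h1 : ∀ i ∈ (Finset.univ : Finset (Fin k)), ‖t i‖ ^ 2 ≤ 1 := by
    intro i _
    rw [Real.norm_eq_abs]
    exact pow_le_one₀ (abs_nonneg _) (ht i)
  refine (Finset.sum_le_sum h1).trans ?_
  simp
  nlinarith [(Nat.cast_nonneg k : (0 : ℝ) ≤ k)]

theorem disk_poly {k n : ℕ} (φ : Euc k → Euc n) (U : Set (Euc k)) (hU : IsOpen U)
    (hcU : unitCube k ⊆ U) (hφ : ContDiffOn ℝ (⊤ : ℕ∞) φ U)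
    (hd : ∀ s : ℕ, 1 ≤ s → ∀ t ∈ unitCube k, ‖iteratedFDeriv ℝ s φ t‖ ≤ 1) (d : ℕ) :
    ∃ P : Fin n → MvPolynomial (Fin k) ℝ, (∀ j, (P j).totalDegree ≤ d) ∧
      ∀ t ∈ unitCube k, ∀ j, |φ t j - MvPolynomial.eval (fun l => t l) (P j)| ≤
        ((k : ℝ) + 1) ^ (d + 1) / (d.factorial : ℝ) := by
  classical
  choose p hp1 hp2 using fun (i : ℕ) (j : Fin n) => multi_poly (iteratedFDeriv ℝ i φ 0) j
  refine ⟨fun j => ∑ i ∈ Finset.range (d + 1), MvPolynomial.C ((i.factorial : ℝ)⁻¹) * p i j,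
    fun j => ?_, fun t ht j => ?_⟩
  · refine MvPolynomial.totalDegree_finsetSum_le fun i hi => ?_
    refine (MvPolynomial.totalDegree_mul _ _).trans ?_
    rw [MvPolynomial.totalDegree_C, zero_add]
    exact (hp1 i j).trans (by simpa [Nat.lt_succ_iff] using hi)
  · set g : ℝ →L[ℝ] Euc k := ContinuousLinearMap.toSpanSingleton ℝ t with hg
    have hgv : ∀ τ, g τ = τ • t := fun τ => by simp [hg]
    have hgc : ∀ τ ∈ Icc (0 : ℝ) 1, g τ ∈ unitCube k := by
      intro τ hτ i
      rw [hgv, PiLp.smul_apply, smul_eq_mul, abs_mul, abs_of_nonneg hτ.1]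
      exact mul_le_one₀ hτ.2 (abs_nonneg _) (ht i)
    have hV : IsOpen (g ⁻¹' U) := hU.preimage g.continuous
    have hcd : ContDiffOn ℝ (⊤ : ℕ∞) (φ ∘ g) (g ⁻¹' U) :=
      hφ.comp g.contDiff.contDiffOn (fun x hx => hx)
    have hder : ∀ i : ℕ, ∀ τ ∈ Icc (0 : ℝ) 1, iteratedDerivWithin i (φ ∘ g) (Icc 0 1) τ =
        iteratedFDeriv ℝ i φ (g τ) (fun _ => t) := by
      intro i τ hτ
      have hτV : τ ∈ g ⁻¹' U := hcU (hgc τ hτ)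
      rw [iteratedDerivWithin_eq_iteratedDeriv (uniqueDiffOn_Icc zero_lt_one)
        ((hcd.contDiffAt (hV.mem_nhds hτV)).of_le (by exact_mod_cast le_top)) hτ,
        iteratedDeriv_eq_iteratedFDeriv]
      rw [← iteratedFDerivWithin_of_isOpen i hV hτV,
        g.iteratedFDerivWithin_comp_right hφ hU.uniqueDiffOn hV.uniqueDiffOn hτV
          (by exact_mod_cast le_top),
        iteratedFDerivWithin_of_isOpen i hU hτV]
      simp [hg]
    have hC : ∀ y ∈ Icc (0 : ℝ) 1, ‖iteratedDerivWithin (d + 1) (φ ∘ g) (Icc 0 1) y‖ ≤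
        ((k : ℝ) + 1) ^ (d + 1) := by
      intro y hy
      rw [hder _ y hy]
      refine (ContinuousMultilinearMap.le_opNorm _ _).trans ?_
      rw [Finset.prod_const, Finset.card_univ, Fintype.card_fin]
      calc _ ≤ 1 * ‖t‖ ^ (d + 1) := by
            gcongr
            exact hd _ (by omega) _ (hgc y hy)
        _ ≤ _ := by
            rw [one_mul]
            exact pow_le_pow_left₀ (norm_nonneg _) (cube_norm t ht) _
    have hT := taylor_mean_remainder_bound (f := φ ∘ g) (n := d) (x := 1) zero_le_one
      ((hcd.mono (fun τ hτ => hcU (hgc τ hτ))).of_le (by exact_mod_cast le_top))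
      ⟨zero_le_one, le_rfl⟩ hC
    rw [taylor_within_apply] at hT
    have h0 : (0 : ℝ) ∈ Icc (0 : ℝ) 1 := ⟨le_rfl, zero_le_one⟩
    have hj := (PiLp.norm_apply_le _ j).trans hT
    rw [PiLp.sub_apply, Real.norm_eq_abs, WithLp.ofLp_sum, Finset.sum_apply] at hj
    have e1 : (φ ∘ g) 1 = φ t := by simp [hg]
    rw [e1] at hj
    simp only [sub_zero, one_pow, mul_one] at hj
    rw [map_sum]
    refine le_trans (le_of_eq ?_) hj
    congr 2
    refine Finset.sum_congr rfl fun i _ => ?_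
    rw [map_mul, MvPolynomial.eval_C, hp2, PiLp.smul_apply, smul_eq_mul, hder i 0 h0]
    rw [show g 0 = 0 from map_zero g]

theorem eval_comp_poly {k n : ℕ} (P : Fin n → MvPolynomial (Fin k) ℝ) (G : MvPolynomial (Fin n) ℝ)
    (t : Fin k → ℝ) : MvPolynomial.eval (fun i => MvPolynomial.eval t (P i)) G =
      MvPolynomial.eval t (MvPolynomial.aeval P G) := by
  induction G using MvPolynomial.induction_on with
  | C a => simp
  | add p q hp hq => simp [hp, hq]
  | mul_X p i hp => simp [hp]

theorem disk_m0 (R L ε1 : ℝ) (hR : 1 ≤ R) (hL : 2 ≤ L) (hε1 : 0 < ε1) :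
    ∃ m0 : ℕ, ∀ m : ℕ, R ^ (m + m0 + 1) / ((m + m0).factorial : ℝ) ≤ ε1 / (2 * L ^ m) := by
  obtain ⟨m0, hm0⟩ := pow_unbounded_of_one_lt (R * Real.exp (L * R) * 2 / ε1)
    (show 1 < L by linarith)
  refine ⟨m0, fun m => ?_⟩
  have hL0 : 0 < L := by linarith
  have h1 := Real.pow_div_factorial_le_exp (L * R) (by positivity) (m + m0)
  have hLm : 0 < L ^ m := by positivity
  have hfac : (0 : ℝ) < ((m + m0).factorial : ℝ) := by exact_mod_cast Nat.factorial_pos _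
  rw [div_lt_iff₀ hε1] at hm0
  rw [div_le_iff₀ hfac] at h1
  rw [div_le_div_iff₀ hfac (by positivity)]
  rw [mul_pow, pow_add L] at h1
  have h2 : L ^ m * L ^ m0 * (R ^ (m + m0 + 1) * (2 * L ^ m)) ≤
      L ^ m * L ^ m0 * (ε1 * ((m + m0).factorial : ℝ)) := by
    calc _ = (L ^ m * L ^ m0 * R ^ (m + m0)) * (R * 2 * L ^ m) := by ring
      _ ≤ (Real.exp (L * R) * ((m + m0).factorial : ℝ)) * (R * 2 * L ^ m) := by gcongr
      _ = (R * Real.exp (L * R) * 2) * (((m + m0).factorial : ℝ) * L ^ m) := by ring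
      _ ≤ (L ^ m0 * ε1) * (((m + m0).factorial : ℝ) * L ^ m) := by gcongr
      _ = _ := by ring
  exact le_of_mul_le_mul_left h2 (by positivity)

/-- polynomials close to the disk with values in the cube -/
theorem disk_poly_in {k n : ℕ} (a b : Fin n → ℝ) (hab : ∀ i, a i < b i)
    (φ : Euc k → Euc n) (d : ℕ) (η : ℝ) (hη : 0 < η)
    (P : Fin n → MvPolynomial (Fin k) ℝ) (hP : ∀ j, (P j).totalDegree ≤ d)
    (hφ : ∀ t ∈ unitCube k, ∀ j, φ t j ∈ Icc (a j) (b j))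
    (hPφ : ∀ t ∈ unitCube k, ∀ j, |φ t j - MvPolynomial.eval (fun l => t l) (P j)| ≤ η) :
    ∃ Q : Fin n → MvPolynomial (Fin k) ℝ, (∀ j, (Q j).totalDegree ≤ d) ∧
      (∀ t ∈ unitCube k, ∀ j, MvPolynomial.eval (fun l => t l) (Q j) ∈ Icc (a j) (b j)) ∧
      ∀ t ∈ unitCube k, ∀ j, |φ t j - MvPolynomial.eval (fun l => t l) (Q j)| ≤ 2 * η := by
  set c : Fin n → ℝ := fun j => (a j + b j) / 2 with hc
  set h : Fin n → ℝ := fun j => (b j - a j) / 2 with hh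
  have hh0 : ∀ j, 0 < h j := fun j => by have := hab j; simp only [hh]; linarith
  refine ⟨fun j => MvPolynomial.C (c j) + MvPolynomial.C (h j / (h j + η)) *
    (P j - MvPolynomial.C (c j)), fun j => ?_, ?_⟩
  · refine (MvPolynomial.totalDegree_add _ _).trans (max_le (by simp) ?_)
    refine (MvPolynomial.totalDegree_mul _ _).trans ?_
    rw [MvPolynomial.totalDegree_C, zero_add]
    exact (MvPolynomial.totalDegree_sub _ _).trans (max_le (hP j) (by simp))
  · have key : ∀ t ∈ unitCube k, ∀ j, ∃ z : ℝ, |z| ≤ h j ∧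
        MvPolynomial.eval (fun l => t l) (MvPolynomial.C (c j) + MvPolynomial.C (h j / (h j + η)) *
          (P j - MvPolynomial.C (c j))) = c j + z ∧
        |MvPolynomial.eval (fun l => t l) (P j) - (c j + z)| ≤ η := by
      intro t ht j
      have h1 := hφ t ht j
      have h2 := hPφ t ht j
      have h3 := hh0 j
      set y := MvPolynomial.eval (fun l => t l) (P j) with hy
      have h4 : |y - c j| ≤ h j + η := by
        rw [abs_le] at h2 ⊢
        simp only [hc, hh]
        constructor <;> linarith [h1.1, h1.2]
      have hpos : 0 < h j + η := by linarith
      refine ⟨h j / (h j + η) * (y - c j), ?_, by simp [hy], ?_⟩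
      · rw [abs_mul, abs_of_pos (by positivity), div_mul_eq_mul_div, div_le_iff₀ hpos]
        gcongr
      · have : y - (c j + h j / (h j + η) * (y - c j)) = η / (h j + η) * (y - c j) := by
          field_simp; ring
        rw [this, abs_mul, abs_of_pos (by positivity), div_mul_eq_mul_div, div_le_iff₀ hpos]
        gcongr
    constructor
    · intro t ht j
      obtain ⟨z, hz, he, -⟩ := key t ht j
      rw [he]
      rw [abs_le] at hz
      simp only [hc, hh] at hz ⊢
      constructor <;> linarith [hz.1, hz.2]
    · intro t ht j
      obtain ⟨z, -, he, hz⟩ := key t ht j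
      rw [he]
      have := hPφ t ht j
      calc _ ≤ _ := abs_sub_le _ _ _
        _ ≤ η + η := add_le_add this hz
        _ = 2 * η := by ring

theorem disk_count {k : ℕ} (a b : Fin (k + 1) → ℝ) (hab : ∀ i, a i < b i)
    (f : Fin (k + 1) → ℝ → ℝ)
    (hmaps : ∀ i, Set.MapsTo (f i) (Set.Icc (a i) (b i)) (Set.Icc (a i) (b i)))
    (K : Set (Euc (k + 1))) (hK : K = {x : Euc (k + 1) | ∀ i, x i ∈ Set.Icc (a i) (b i)})
    (F : ↥K → ↥K)
    (hF : ∀ (x : ↥K) (i : Fin (k + 1)), ((F x : Euc (k + 1)) i) = f i ((x : Euc (k + 1)) i))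
    (L : ℝ) (hL : 2 ≤ L)
    (hlip : ∀ i, ∀ x ∈ Icc (a i) (b i), ∀ y ∈ Icc (a i) (b i), |f i x - f i y| ≤ L * |x - y|)
    (ε1 : ℝ) (hε1 : 0 < ε1) :
    ∃ m0 : ℕ, ∀ S ∈ cubeFamily (k + 1) k K, ∀ m : ℕ, ∀ (p : Fin (k + 1) → ℕ → ℝ)
      (N : Fin (k + 1) → ℕ), (∀ i, StrictMono (p i)) →
      (∀ i, ∀ y ∈ Icc (a i) (b i), ∃ l < N i, p i l ≤ y ∧ y ≤ p i (l + 1)) →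
      (∀ i l y y', p i l ≤ y → y ≤ p i (l + 1) → p i l ≤ y' → y' ≤ p i (l + 1) →
        ∀ s < m, |(f i)^[s] y - (f i)^[s] y'| ≤ ε1) →
      ∀ T : ℕ, (∀ i, ∏ j ∈ Finset.univ.erase i, (N j + 1) ≤ T) →
      ∀ ε : ℝ, ((k + 1 : ℕ) : ℝ) * (3 * ε1) < ε →
      coverNum F ε m S ≤
        ((pcK (k + 1) ((k + 1) * ((k + 1) * (m + m0) + 1) ^ k) * T : ℕ) : ℕ∞) := by
  classical
  obtain ⟨m0, hm0⟩ := disk_m0 ((k : ℝ) + 1) L ε1 (by simp) hL hε1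
  refine ⟨m0, ?_⟩
  rintro S ⟨φ, ⟨U, hU, hcU, hφU⟩, hder, hφK, hS⟩ m p N hp hcov hsm T hT ε hε
  have hL1 : 1 ≤ L := by linarith
  have hL0 : 0 < L := by linarith
  obtain ⟨P, hPd, hPφ⟩ := disk_poly φ U hU hcU hφU hder (m + m0)
  have hφI : ∀ t ∈ unitCube k, ∀ j, φ t j ∈ Icc (a j) (b j) := by
    intro t ht
    have := hφK t ht
    rw [hK] at this
    exact this
  obtain ⟨Q, hQd, hQI, hQφ⟩ := disk_poly_in a b hab φ (m + m0) (ε1 / (2 * L ^ m)) (by positivity)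
    P hPd hφI (fun t ht j => (hPφ t ht j).trans (hm0 m))
  obtain ⟨G, hG0, hGs, hGQ⟩ := pc_alg_dep' (m + m0) Q hQd
  have hGd : G.totalDegree ≤ (k + 1) * ((k + 1) * (m + m0) + 1) ^ k := by
    unfold MvPolynomial.totalDegree
    refine Finset.sup_le fun s hs => ?_
    rw [Finsupp.sum_fintype _ _ (fun _ => rfl)]
    refine (Finset.sum_le_sum fun i _ => hGs s hs i).trans ?_
    simp
  set B : Finset (Fin (k + 1) → ℕ) := (Fintype.piFinset fun i => Finset.range (N i)).filter
    fun v => ∃ x : Fin (k + 1) → ℝ, (∀ i, p i (v i) ≤ x i ∧ x i ≤ p i (v i + 1)) ∧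
      MvPolynomial.eval x G = 0 with hB
  have hBcard := pc_box (k + 1) _ G hG0 hGd p hp N T hT B
    (fun v hv i => Finset.mem_range.1 (Fintype.mem_piFinset.1 (Finset.mem_filter.1 hv).1 i))
    (fun v hv => (Finset.mem_filter.1 hv).2)
  refine le_trans (coverNum_le_of_col F ε m S B (fun x v => ∃ t ∈ unitCube k, φ t = (x : Euc _) ∧
    ∀ i, p i (v i) ≤ MvPolynomial.eval (fun l => t l) (Q i) ∧
      MvPolynomial.eval (fun l => t l) (Q i) ≤ p i (v i + 1)) ?_ ?_) (by exact_mod_cast hBcard)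
  · intro x hx
    rw [hS] at hx
    obtain ⟨t, ht, hxt⟩ := hx
    choose v hv1 hv2 using fun i => hcov i _ (hQI t ht i)
    refine ⟨v, Finset.mem_filter.2 ⟨Fintype.mem_piFinset.2 fun i => Finset.mem_range.2 (hv1 i),
      _, hv2, ?_⟩, t, ht, hxt, hv2⟩
    rw [eval_comp_poly, hGQ, map_zero]
  · rintro x - y - v - ⟨t, ht, hxt, hv⟩ ⟨u, hu, hyu, hw⟩ s hs
    refine (F_dist_le f K F hF s x y (3 * ε1) fun i => ?_).trans_lt hε
    have near : ∀ t ∈ unitCube k, |(f i)^[s] (φ t i) -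
        (f i)^[s] (MvPolynomial.eval (fun l => t l) (Q i))| ≤ ε1 := by
      intro t ht
      have h1 := iter_lip (f i) (a i) (b i) L (hmaps i) hL1 (hlip i) s _ (hφI t ht i) _ (hQI t ht i)
      have h2 := hQφ t ht i
      calc _ ≤ _ := h1
        _ ≤ L ^ m * (2 * (ε1 / (2 * L ^ m))) := by gcongr
        _ = ε1 := by field_simp
    have h1 := near t ht
    have h2 := near u hu
    have h3 := hsm i (v i) _ _ (hv i).1 (hv i).2 (hw i).1 (hw i).2 s hs
    rw [hxt] at h1
    rw [hyu] at h2
    rw [abs_le] at h1 h2 h3 ⊢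
    constructor <;> linarith [h1.1, h1.2, h2.1, h2.2, h3.1, h3.2]

theorem poly_le_exp (δ : ℝ) (hδ : 0 < δ) (c n m0 k q : ℕ) :
    ∃ C : ℝ, 0 ≤ C ∧ ∀ m : ℕ,
      ((c * (n * (n * (m + m0) + 1) ^ k + 1) ^ q : ℕ) : ℝ) ≤ C * Real.exp (m * δ) := by
  refine ⟨c * ((n + 1) * (n * (m0 + 1) + 1) ^ k) ^ q *
    (((k * q).factorial : ℝ) / δ ^ (k * q) * Real.exp δ), by positivity, fun m => ?_⟩
  have h1 : n * (n * (m + m0) + 1) ^ k + 1 ≤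
      ((n + 1) * (n * (m0 + 1) + 1) ^ k) * (m + 1) ^ k := by
    have e1 : n * (m + m0) + 1 ≤ (n * (m0 + 1) + 1) * (m + 1) := by
      have : (n * (m0 + 1) + 1) * (m + 1) = n * (m + m0) + 1 + (n * m0 * m + n + m) := by ring
      omega
    have e2 : 1 ≤ (n * (m + m0) + 1) ^ k := Nat.one_le_pow _ _ (by omega)
    calc n * (n * (m + m0) + 1) ^ k + 1 ≤ (n + 1) * (n * (m + m0) + 1) ^ k := by
          rw [add_mul, one_mul]; omega
      _ ≤ (n + 1) * ((n * (m0 + 1) + 1) * (m + 1)) ^ k := by gcongr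
      _ = _ := by rw [mul_pow]; ring
  have h2 : c * (n * (n * (m + m0) + 1) ^ k + 1) ^ q ≤
      c * ((n + 1) * (n * (m0 + 1) + 1) ^ k) ^ q * (m + 1) ^ (k * q) := by
    calc _ ≤ c * (((n + 1) * (n * (m0 + 1) + 1) ^ k) * (m + 1) ^ k) ^ q := by gcongr
      _ = _ := by rw [mul_pow, pow_mul]; ring
  have h3 : ((m : ℝ) + 1) ^ (k * q) ≤
      ((k * q).factorial : ℝ) / δ ^ (k * q) * Real.exp δ * Real.exp (m * δ) := by
    have := Real.pow_div_factorial_le_exp (δ * (m + 1)) (by positivity) (k * q)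
    have hfac : (0 : ℝ) < ((k * q).factorial : ℝ) := by exact_mod_cast Nat.factorial_pos _
    rw [div_le_iff₀ hfac, mul_pow] at this
    rw [mul_assoc, ← Real.exp_add, div_mul_eq_mul_div, le_div_iff₀ (by positivity)]
    rw [show δ + m * δ = δ * (m + 1) by ring]
    linarith
  calc ((c * (n * (n * (m + m0) + 1) ^ k + 1) ^ q : ℕ) : ℝ)
      ≤ ((c * ((n + 1) * (n * (m0 + 1) + 1) ^ k) ^ q * (m + 1) ^ (k * q) : ℕ) : ℝ) := by
        exact_mod_cast h2
    _ = (c * ((n + 1) * (n * (m0 + 1) + 1) ^ k) ^ q : ℝ) * ((m : ℝ) + 1) ^ (k * q) := by push_cast; ring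
    _ ≤ (c * ((n + 1) * (n * (m0 + 1) + 1) ^ k) ^ q : ℝ) *
        (((k * q).factorial : ℝ) / δ ^ (k * q) * Real.exp δ * Real.exp (m * δ)) := by gcongr
    _ = _ := by ring

theorem T_bound {n : ℕ} (h : Fin n → ℝ) (δ hmin : ℝ) (hδ : 0 < δ) (hm : ∀ i, hmin ≤ h i)
    (C : Fin n → ℝ) (m : ℕ) (N : Fin n → ℕ)
    (hN : ∀ i, (N i : ℝ) + 1 ≤ C i * Real.exp (m * (h i + δ))) (hC : ∀ i, 1 ≤ C i) :
    ((∑ i, ∏ j ∈ Finset.univ.erase i, (N j + 1) : ℕ) : ℝ) ≤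
      (n * ∏ j, C j) * Real.exp (m * (∑ i, h i - hmin + n * δ)) := by
  push_cast
  have key : ∀ i ∈ (Finset.univ : Finset (Fin n)), ∏ j ∈ Finset.univ.erase i, ((N j : ℝ) + 1) ≤
      (∏ j, C j) * Real.exp (m * (∑ i, h i - hmin + n * δ)) := by
    intro i _
    calc ∏ j ∈ Finset.univ.erase i, ((N j : ℝ) + 1)
        ≤ ∏ j ∈ Finset.univ.erase i, (C j * Real.exp (m * (h j + δ))) :=
          Finset.prod_le_prod (fun j _ => by positivity) (fun j _ => hN j)
      _ = (∏ j ∈ Finset.univ.erase i, C j) *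
          Real.exp (m * ∑ j ∈ Finset.univ.erase i, (h j + δ)) := by
          rw [Finset.prod_mul_distrib, Finset.mul_sum, Real.exp_sum]
      _ ≤ _ := by
          have h0 : ∀ s : Finset (Fin n), 0 ≤ ∏ j ∈ s, C j :=
            fun s => Finset.prod_nonneg fun j _ => zero_le_one.trans (hC j)
          have h1 : ∏ j ∈ Finset.univ.erase i, C j ≤ ∏ j, C j := by
            rw [← Finset.mul_prod_erase _ _ (Finset.mem_univ i)]
            exact le_mul_of_one_le_left (h0 _) (hC i)
          have h2 : ∑ j ∈ Finset.univ.erase i, (h j + δ) ≤ ∑ i, h i - hmin + n * δ := by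
            have e := Finset.add_sum_erase Finset.univ (fun j => h j + δ) (Finset.mem_univ i)
            rw [Finset.sum_add_distrib (s := Finset.univ)] at e
            simp only [Finset.sum_const, Finset.card_univ, Fintype.card_fin, nsmul_eq_mul] at e
            have := hm i
            linarith
          apply mul_le_mul h1 _ (Real.exp_pos _).le (h0 _)
          apply Real.exp_le_exp.2
          gcongr
  refine (Finset.sum_le_sum key).trans ?_
  rw [Finset.sum_const, Finset.card_univ, Fintype.card_fin, nsmul_eq_mul, mul_assoc]

theorem Hk_le {k : ℕ} (a b : Fin (k + 1) → ℝ) (hab : ∀ i, a i < b i)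
    (f : Fin (k + 1) → ℝ → ℝ) (hf : ∀ i, ContDiff ℝ (⊤ : ℕ∞) (f i))
    (hmaps : ∀ i, Set.MapsTo (f i) (Set.Icc (a i) (b i)) (Set.Icc (a i) (b i)))
    (h : Fin (k + 1) → ℝ) (hpos : ∀ i, 0 < h i)
    (hh : ∀ i, htop (fun x : Set.Icc (a i) (b i) =>
      (⟨f i (x : ℝ), hmaps i x.2⟩ : Set.Icc (a i) (b i))) = (h i : EReal))
    (K : Set (Euc (k + 1))) (hK : K = {x : Euc (k + 1) | ∀ i, x i ∈ Set.Icc (a i) (b i)})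
    (F : ↥K → ↥K)
    (hF : ∀ (x : ↥K) (i : Fin (k + 1)), ((F x : Euc (k + 1)) i) = f i ((x : Euc (k + 1)) i))
    (δ hmin : ℝ) (hδ : 0 < δ) (hm : ∀ i, hmin ≤ h i) (hms : hmin ≤ ∑ i, h i) :
    HkCube (k + 1) k F ≤ ((∑ i, h i - hmin + ((k : ℝ) + 2) * δ : ℝ) : EReal) := by
  unfold HkCube unifEntColl
  refine iSup_le fun ⟨ε, hε⟩ => ?_
  choose Li hLi1 hLi using fun i => ex_lip (f i) (hf i) (a i) (b i)
  have hLs : ∀ i, Li i ≤ 2 + ∑ i, Li i := fun i => by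
    have := Finset.single_le_sum (f := Li) (fun j _ => zero_le_one.trans (hLi1 j))
      (Finset.mem_univ i)
    linarith
  have hL2 : 2 ≤ 2 + ∑ i, Li i := by
    have := Finset.sum_nonneg (s := Finset.univ) (f := Li) fun j _ => zero_le_one.trans (hLi1 j)
    linarith
  set ε1 : ℝ := ε / (3 * (k + 1) + 1) with hεdef
  have hε1 : 0 < ε1 := by positivity
  have hε1ε : ((k + 1 : ℕ) : ℝ) * (3 * ε1) < ε := by
    have : ε1 * (3 * (k + 1) + 1) = ε := by rw [hεdef]; field_simp
    push_cast
    linarith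
  obtain ⟨m0, hm0⟩ := disk_count a b hab f hmaps K hK F hF (2 + ∑ i, Li i) hL2
    (fun i x hx y hy => (hLi i x hx y hy).trans
      (mul_le_mul_of_nonneg_right (hLs i) (abs_nonneg _))) ε1 hε1
  choose C hC0 hC using fun i => ym_partition (f i) (hf i) (a i) (b i) (hab i) (hmaps i) (h i)
    (hpos i).le (ex_hcov (f i) (a i) (b i) (hmaps i) (h i) (hh i)) ε1 hε1 δ hδ
  choose p N hp hcov hsm hN using hC
  obtain ⟨c, q, hcq⟩ := pcK_bound (k + 1)
  obtain ⟨D, hD0, hD⟩ := poly_le_exp δ hδ c (k + 1) m0 k q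
  set C' : Fin (k + 1) → ℝ := fun i => max (C i) 1 with hC'
  set Tm : ℕ → ℕ := fun m => ∑ i, ∏ j ∈ Finset.univ.erase i, (N j m + 1) with hTm
  have hT : ∀ m, (Tm m : ℝ) ≤ (((k + 1 : ℕ) : ℝ) * ∏ j, C' j) *
      Real.exp (m * (∑ i, h i - hmin + ((k + 1 : ℕ) : ℝ) * δ)) := fun m =>
    T_bound h δ hmin hδ hm C' m (fun i => N i m)
      (fun i => (hN i m).trans (mul_le_mul_of_nonneg_right (le_max_left _ _) (Real.exp_pos _).le))
      (fun i => le_max_right _ _)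
  have hC'0 : 0 ≤ ((k + 1 : ℕ) : ℝ) * ∏ j, C' j :=
    mul_nonneg (by positivity) (Finset.prod_nonneg fun j _ => zero_le_one.trans (le_max_right _ _))
  set A : ℝ := D * (((k + 1 : ℕ) : ℝ) * ∏ j, C' j) with hA
  have hA0 : 0 ≤ A := mul_nonneg hD0 hC'0
  set cc : ℝ := ∑ i, h i - hmin + ((k : ℝ) + 2) * δ with hcc
  have hcc0 : 0 ≤ cc := by
    have : 0 ≤ ((k : ℝ) + 2) * δ := by positivity
    linarith
  apply ent_limsup_le _ _ (Real.log (A + 1))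
  refine Eventually.of_forall fun m =>
    ⟨pcK (k + 1) ((k + 1) * ((k + 1) * (m + m0) + 1) ^ k) * Tm m + 1, ?_, ?_⟩
  · refine iSup₂_le fun S hS => ?_
    refine (hm0 S hS m (fun i => p i m) (fun i => N i m) (fun i => hp i m) (fun i => hcov i m)
      (fun i => hsm i m) (Tm m) (fun i => ?_) ε hε1ε).trans ?_
    · exact Finset.single_le_sum (f := fun i => ∏ j ∈ Finset.univ.erase i, (N j m + 1))
        (fun _ _ => Nat.zero_le _) (Finset.mem_univ i)
    · exact_mod_cast Nat.le_succ _
  · have h1 : ((pcK (k + 1) ((k + 1) * ((k + 1) * (m + m0) + 1) ^ k) : ℕ) : ℝ) ≤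
        D * Real.exp (m * δ) := le_trans (by exact_mod_cast hcq _) (hD m)
    have h2 : ((pcK (k + 1) ((k + 1) * ((k + 1) * (m + m0) + 1) ^ k) * Tm m + 1 : ℕ) : ℝ) ≤
        Real.exp (m * cc) * (A + 1) := by
      push_cast
      have e1 : 1 ≤ Real.exp (m * cc) := Real.one_le_exp (by positivity)
      have e2 : (pcK (k + 1) ((k + 1) * ((k + 1) * (m + m0) + 1) ^ k) : ℝ) * (Tm m : ℝ) ≤
          A * Real.exp (m * cc) := by
        calc _ ≤ (D * Real.exp (m * δ)) * ((((k + 1 : ℕ) : ℝ) * ∏ j, C' j) *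
              Real.exp (m * (∑ i, h i - hmin + ((k + 1 : ℕ) : ℝ) * δ))) :=
              mul_le_mul h1 (hT m) (Nat.cast_nonneg _) (by positivity)
          _ = A * (Real.exp (m * δ) *
              Real.exp (m * (∑ i, h i - hmin + ((k + 1 : ℕ) : ℝ) * δ))) := by rw [hA]; ring
          _ = _ := by
              rw [← Real.exp_add]
              congr 2
              rw [hcc]; push_cast; ring
      linarith
    refine (Real.log_le_log (by positivity) h2).trans ?_
    rw [Real.log_mul (Real.exp_pos _).ne' (by positivity), Real.log_exp]

theorem main_aux {k : ℕ} (a b : Fin (k + 1) → ℝ) (hab : ∀ i, a i < b i)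
    (f : Fin (k + 1) → ℝ → ℝ) (hf : ∀ i, ContDiff ℝ (⊤ : ℕ∞) (f i))
    (hmaps : ∀ i, Set.MapsTo (f i) (Set.Icc (a i) (b i)) (Set.Icc (a i) (b i)))
    (hent : ∀ i, 0 < htop (fun x : Set.Icc (a i) (b i) =>
      (⟨f i (x : ℝ), hmaps i x.2⟩ : Set.Icc (a i) (b i))))
    (K : Set (Euc (k + 1))) (hK : K = {x : Euc (k + 1) | ∀ i, x i ∈ Set.Icc (a i) (b i)})
    (F : ↥K → ↥K)
    (hF : ∀ (x : ↥K) (i : Fin (k + 1)), ((F x : Euc (k + 1)) i) = f i ((x : Euc (k + 1)) i)) :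
    HkCube (k + 1) k F < htop F := by
  have hex : ∀ i, ∃ h : ℝ, 0 < h ∧ htop (fun x : Set.Icc (a i) (b i) =>
      (⟨f i (x : ℝ), hmaps i x.2⟩ : Set.Icc (a i) (b i))) = (h : EReal) := by
    intro i
    have h1 := htop_fin (f i) (hf i) (a i) (b i) (hab i) (hmaps i)
    have h2 := hent i
    have h3 := EReal.coe_toReal h1 (ne_bot_of_gt h2)
    refine ⟨_, ?_, h3.symm⟩
    rw [← h3] at h2
    exact_mod_cast h2
  choose h hpos hh using hex
  obtain ⟨i0, -, hi0⟩ := Finset.exists_min_image Finset.univ h Finset.univ_nonempty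
  have hmin : ∀ i, h i0 ≤ h i := fun i => hi0 i (Finset.mem_univ i)
  have hms : h i0 ≤ ∑ i, h i :=
    Finset.single_le_sum (f := h) (fun j _ => (hpos j).le) (Finset.mem_univ i0)
  set δ : ℝ := h i0 / (2 * k + 4) with hδd
  have hδ : 0 < δ := div_pos (hpos i0) (by positivity)
  have hup := Hk_le a b hab f hf hmaps h hpos hh K hK F hF δ (h i0) hδ hmin hms
  have hlow := htop_F_ge a b f K hK F hF (by omega) hab hmaps (fun i => h i - δ)
    (fun i => by rw [hh i, EReal.coe_lt_coe_iff]; linarith)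
  refine hup.trans_lt (lt_of_lt_of_le ?_ hlow)
  rw [EReal.coe_lt_coe_iff, Finset.sum_sub_distrib]
  simp only [Finset.sum_const, Finset.card_univ, Fintype.card_fin, nsmul_eq_mul]
  have e : δ * (2 * k + 4) = h i0 := by rw [hδd]; field_simp
  push_cast
  linarith

/-- the Cartesian product of finitely many `C^∞` interval maps, each with
nonzero topological entropy, is entropy-expanding (`H^{n-1}_top(F) < h_top(F)`). -/
theorem stmt_13 (n : ℕ) (hn : 1 ≤ n) (a b : Fin n → ℝ) (hab : ∀ i, a i < b i)
    (f : Fin n → ℝ → ℝ) (hf : ∀ i, ContDiff ℝ (⊤ : ℕ∞) (f i))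
    (hmaps : ∀ i, Set.MapsTo (f i) (Set.Icc (a i) (b i)) (Set.Icc (a i) (b i)))
    -- each interval map has nonzero topological entropy:
    (hent : ∀ i, 0 < htop (fun x : Set.Icc (a i) (b i) =>
      (⟨f i (x : ℝ), hmaps i x.2⟩ : Set.Icc (a i) (b i))))
    (K : Set (Euc n)) (hK : K = {x : Euc n | ∀ i, x i ∈ Set.Icc (a i) (b i)})
    (F : ↥K → ↥K)
    (hF : ∀ (x : ↥K) (i : Fin n), ((F x : Euc n) i) = f i ((x : Euc n) i)) :
    HkCube n (n - 1) F < htop F := by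
  obtain ⟨k, rfl⟩ : ∃ k, n = k + 1 := ⟨n - 1, by omega⟩
  exact main_aux a b hab f hf hmaps hent K hK F hF


end
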